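/- arXiv:1212.2551 — 2 statements merged into one kernel-verified Lean document; each statement's English description precedes it below -/
import Mathlib

section
/- Let n ≥ 2 and suppose Λ is a critical lattice of the unit ball B^n which is unique up to rotation, i.e., every critical lattice of B^n equals UΛ for some orthogonal map U (necessarily m(Λ) = 1, so S(Λ) lies on the unit sphere). Then B^n is reducible—that is, there exists an origin-symmetric convex body K properly contained in B^n with d_K = d_{B^n}—if and only if the configuration S(Λ) is redundantly extreme. -/
open scoped RealInnerProductSpace
open Metric MeasureTheory

noncomputable section

abbrev Euc (n : ℕ) := EuclideanSpace ℝ (Fin n)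

/-- The rank-one symmetric map `P_x : y ↦ ⟪y, x⟫ • x`. -/
def projMap {F : Type*} [NormedAddCommGroup F] [InnerProductSpace ℝ F] (x : F) :
    F →ₗ[ℝ] F where
  toFun y := (⟪y, x⟫) • x
  map_add' y z := by simp [inner_add_left, add_smul]
  map_smul' c y := by simp [real_inner_smul_left, mul_smul]

/-- A configuration is perfect if the maps `P_x`, `x ∈ S`, span the symmetric maps. -/
def IsPerfectCfg {F : Type*} [NormedAddCommGroup F] [InnerProductSpace ℝ F]
    (S : Set F) : Prop :=
  ∀ T : F →ₗ[ℝ] F, T.IsSymmetric → T ∈ Submodule.span ℝ (projMap '' S)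

/-- A configuration is eutactic if `Id = Σ_{x∈S} υ_x P_x` with `υ_x > 0`, `υ_x = υ_{-x}`. -/
def IsEutacticCfg {F : Type*} [NormedAddCommGroup F] [InnerProductSpace ℝ F]
    (S : Set F) : Prop :=
  ∃ υ : F → ℝ, (∀ x ∈ S, 0 < υ x) ∧ (∀ x ∉ S, υ x = 0) ∧
    (Function.support υ).Finite ∧ (∀ x, υ x = υ (-x)) ∧
    ∑ᶠ x, υ x • projMap x = (LinearMap.id : F →ₗ[ℝ] F)

/-- A configuration is semi-eutactic if `Id = Σ_{x∈S} υ_x P_x` with `υ_x ≥ 0`, `υ_x = υ_{-x}`. -/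
def IsSemiEutacticCfg {F : Type*} [NormedAddCommGroup F] [InnerProductSpace ℝ F]
    (S : Set F) : Prop :=
  ∃ υ : F → ℝ, (∀ x ∈ S, 0 ≤ υ x) ∧ (∀ x ∉ S, υ x = 0) ∧
    (Function.support υ).Finite ∧ (∀ x, υ x = υ (-x)) ∧
    ∑ᶠ x, υ x • projMap x = (LinearMap.id : F →ₗ[ℝ] F)

/-- A configuration is extreme if it is perfect and eutactic. -/
def IsExtremeCfg {F : Type*} [NormedAddCommGroup F] [InnerProductSpace ℝ F]
    (S : Set F) : Prop :=
  IsPerfectCfg S ∧ IsEutacticCfg S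

/-- Hilbert–Schmidt (Frobenius) norm of a linear map on `ℝ^n`. -/
def frobNorm {n : ℕ} (T : Euc n →ₗ[ℝ] Euc n) : ℝ :=
  Real.sqrt (∑ j, ∑ i, (T (EuclideanSpace.single j 1) i) ^ 2)

/-- The lattice `T ℤ^n` as a set of points. -/
def latticeSet {n : ℕ} (T : Euc n →ₗ[ℝ] Euc n) : Set (Euc n) :=
  {v | ∃ z : Fin n → ℤ, v = T (∑ i, (z i : ℝ) • EuclideanSpace.single i 1)}

/-- A set is an (n-dimensional) lattice if it is `T ℤ^n` for an invertible `T`. -/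
def IsLattice {n : ℕ} (Λ : Set (Euc n)) : Prop :=
  ∃ T : Euc n →ₗ[ℝ] Euc n, LinearMap.det T ≠ 0 ∧ Λ = latticeSet T

/-- The determinant `d(Λ) = |det T|` of a lattice. -/
def latDet {n : ℕ} (Λ : Set (Euc n)) : ℝ :=
  sInf {d | ∃ T : Euc n →ₗ[ℝ] Euc n, Λ = latticeSet T ∧ d = |LinearMap.det T|}

/-- The metric `δ(Λ, Λ') = inf ‖T - T'‖` on the space of lattices. -/
def latDist {n : ℕ} (Λ Λ' : Set (Euc n)) : ℝ :=
  sInf {d | ∃ T T' : Euc n →ₗ[ℝ] Euc n,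
    Λ = latticeSet T ∧ Λ' = latticeSet T' ∧ d = frobNorm (T - T')}

/-- The minimal norm `m(Λ)`. -/
def minNorm {n : ℕ} (Λ : Set (Euc n)) : ℝ :=
  sInf {r | ∃ x ∈ Λ, x ≠ 0 ∧ r = ‖x‖ ^ 2}

/-- The set `S(Λ)` of minimal vectors of a lattice. -/
def minVecs {n : ℕ} (Λ : Set (Euc n)) : Set (Euc n) :=
  {x | x ∈ Λ ∧ x ≠ 0 ∧ ‖x‖ ^ 2 = minNorm Λ}

/-- An origin-symmetric convex body. -/
structure IsSymCB {n : ℕ} (K : Set (Euc n)) : Prop where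
  convex : Convex ℝ K
  compact : IsCompact K
  nonempty_interior : (interior K).Nonempty
  symm : -K = K

/-- A lattice is admissible for a body if it meets the interior only at the origin. -/
def IsAdmissible {n : ℕ} (Λ K : Set (Euc n)) : Prop :=
  Λ ∩ interior K ⊆ {0}

/-- The critical determinant `d_K`. -/
def critDet {n : ℕ} (K : Set (Euc n)) : ℝ :=
  sInf {d | ∃ Λ : Set (Euc n), IsLattice Λ ∧ IsAdmissible Λ K ∧ d = latDet Λ}

/-- A critical lattice of `K`: an admissible lattice attaining the critical determinant. -/
def IsCriticalLattice {n : ℕ} (Λ K : Set (Euc n)) : Prop :=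
  IsLattice Λ ∧ IsAdmissible Λ K ∧ latDet Λ = critDet K

/-- The optimal lattice packing fraction `φ(K) = 2⁻ⁿ vol(K) / d_K`. -/
def packFrac {n : ℕ} (K : Set (Euc n)) : ℝ :=
  (volume K).toReal / (2 ^ n * critDet K)

/-- The closed unit ball `Bⁿ`. -/
def unitBall (n : ℕ) : Set (Euc n) := Metric.closedBall 0 1

/-- The support function of a body. -/
def suppFn {n : ℕ} (K : Set (Euc n)) (x : Euc n) : ℝ :=
  sSup ((fun y => ⟪x, y⟫) '' K)

/-- The radial function of a body. -/
def radFn {n : ℕ} (K : Set (Euc n)) (x : Euc n) : ℝ :=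
  sSup {t : ℝ | 0 ≤ t ∧ t • x ∈ K}

/-- No symmetric descent direction for the configuration `S`. -/
def NoDesc {n : ℕ} (S : Set (Euc n)) : Prop :=
  ∀ A : Euc n →ₗ[ℝ] Euc n, A.IsSymmetric → LinearMap.trace ℝ _ A ≤ 0 →
    (∀ y ∈ S, 0 ≤ ⟪y, A y⟫) → A = 0

lemma br_spec {n : ℕ} (A : Euc n →ₗ[ℝ] Euc n) (hA : A.IsSymmetric) :
    ∃ (b : OrthonormalBasis (Fin n) ℝ (Euc n)) (l : Fin n → ℝ), ∀ i, A (b i) = l i • b i := by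
  have hn : Module.finrank ℝ (Euc n) = n := by simp
  exact ⟨hA.eigenvectorBasis hn, hA.eigenvalues hn, fun i => by
    simpa using hA.apply_eigenvectorBasis hn i⟩

lemma br_det {n : ℕ} (A : Euc n →ₗ[ℝ] Euc n) (b : OrthonormalBasis (Fin n) ℝ (Euc n))
    (l : Fin n → ℝ) (h : ∀ i, A (b i) = l i • b i) (t : ℝ) :
    LinearMap.det (LinearMap.id + t • A) = ∏ i, (1 + t * l i) := by
  rw [← LinearMap.det_toMatrix b.toBasis]
  have : LinearMap.toMatrix b.toBasis b.toBasis (LinearMap.id + t • A)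
      = Matrix.diagonal (fun i => 1 + t * l i) := by
    ext i j
    rw [LinearMap.toMatrix_apply]
    simp [h, Matrix.diagonal_apply]
    split_ifs with hij
    · subst hij; simp
    · simp
  rw [this, Matrix.det_diagonal]

lemma br_trace {n : ℕ} (A : Euc n →ₗ[ℝ] Euc n) (b : OrthonormalBasis (Fin n) ℝ (Euc n))
    (l : Fin n → ℝ) (h : ∀ i, A (b i) = l i • b i) :
    LinearMap.trace ℝ _ A = ∑ i, l i := by
  rw [LinearMap.trace_eq_sum_inner A b]
  simp [h, inner_smul_right]

lemma br_zero {n : ℕ} (A : Euc n →ₗ[ℝ] Euc n) (b : OrthonormalBasis (Fin n) ℝ (Euc n))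
    (l : Fin n → ℝ) (h : ∀ i, A (b i) = l i • b i) (h0 : ∀ i, l i = 0) : A = 0 := by
  apply b.toBasis.ext
  intro i
  simp [h, h0]

/-- the spectral decomposition -/
lemma br_decomp {n : ℕ} (A : Euc n →ₗ[ℝ] Euc n) (b : OrthonormalBasis (Fin n) ℝ (Euc n))
    (l : Fin n → ℝ) (h : ∀ i, A (b i) = l i • b i) : A = ∑ i, l i • projMap (b i) := by
  apply b.toBasis.ext
  intro i
  simp only [OrthonormalBasis.coe_toBasis, h, LinearMap.sum_apply, LinearMap.smul_apply]
  rw [Finset.sum_eq_single i]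
  · simp [projMap]
  · intro j _ hj
    simp [projMap, b.inner_eq_ite, hj.symm]
  · simp

lemma br_trace_proj {n : ℕ} (A : Euc n →ₗ[ℝ] Euc n) (y : Euc n) :
    LinearMap.trace ℝ _ (A ∘ₗ projMap y) = ⟪y, A y⟫ := by
  rw [LinearMap.trace_eq_sum_inner _ (EuclideanSpace.basisFun (Fin n) ℝ)]
  rw [← OrthonormalBasis.sum_inner_mul_inner (EuclideanSpace.basisFun (Fin n) ℝ) y (A y)]
  refine Finset.sum_congr rfl fun i _ => ?_
  simp only [LinearMap.comp_apply, projMap, LinearMap.coe_mk, AddHom.coe_mk, map_smul,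
    inner_smul_right, real_inner_comm]

lemma br_trace_sq {n : ℕ} (A : Euc n →ₗ[ℝ] Euc n) (hA : A.IsSymmetric)
    (h : LinearMap.trace ℝ _ (A ∘ₗ A) = 0) : A = 0 := by
  let b := EuclideanSpace.basisFun (Fin n) ℝ
  rw [LinearMap.trace_eq_sum_inner _ b] at h
  have h2 : ∀ i, ⟪b i, (A ∘ₗ A) (b i)⟫ = ‖A (b i)‖ ^ 2 := by
    intro i
    rw [LinearMap.comp_apply, ← hA, real_inner_self_eq_norm_sq]
  simp only [h2] at h
  rw [Finset.sum_eq_zero_iff_of_nonneg (fun _ _ => by positivity)] at h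
  apply b.toBasis.ext
  intro i
  simpa using h i (Finset.mem_univ _)

lemma br_extreme_noDesc {n : ℕ} (S : Set (Euc n)) (h : IsExtremeCfg S) : NoDesc S := by
  intro A hA htr hS
  obtain ⟨hp, υ, hpos, hz, hfin, -, hid⟩ := h
  rw [finsum_eq_sum_of_support_subset (s := hfin.toFinset) _ (by
    intro x hx
    simp only [Function.mem_support, ne_eq, smul_eq_zero, not_or] at hx
    simpa using hx.1)] at hid
  have htr2 : LinearMap.trace ℝ _ A = ∑ x ∈ hfin.toFinset, υ x * ⟪x, A x⟫ := by
    conv_lhs => rw [← LinearMap.comp_id A, ← hid]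
    have hc : A ∘ₗ (∑ i ∈ hfin.toFinset, υ i • projMap i)
        = ∑ i ∈ hfin.toFinset, υ i • (A ∘ₗ projMap i) := by
      apply LinearMap.ext
      intro u
      simp
    rw [hc]
    simp only [map_sum, map_smul, br_trace_proj, smul_eq_mul]
  have hnn : ∀ x ∈ hfin.toFinset, 0 ≤ υ x * ⟪x, A x⟫ := by
    intro x hx
    have hxS : x ∈ S := by
      by_contra hc
      simp [hz x hc] at hx
    exact mul_nonneg (hpos x hxS).le (hS x hxS)
  have hsum : ∑ x ∈ hfin.toFinset, υ x * ⟪x, A x⟫ = 0 :=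
    le_antisymm (htr2 ▸ htr) (Finset.sum_nonneg hnn)
  rw [Finset.sum_eq_zero_iff_of_nonneg hnn] at hsum
  have h0 : ∀ y ∈ S, ⟪y, A y⟫ = 0 := by
    intro y hy
    have := hsum y (by simpa using (hpos y hy).ne')
    exact (mul_eq_zero.1 this).resolve_left (hpos y hy).ne'
  apply br_trace_sq A hA
  have key : ∀ B ∈ Submodule.span ℝ (projMap '' S), LinearMap.trace ℝ _ (A ∘ₗ B) = 0 := by
    intro B hB
    induction hB using Submodule.span_induction with
    | mem x hx =>
      obtain ⟨y, hy, rfl⟩ := hx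
      rw [br_trace_proj, h0 y hy]
    | zero => simp
    | add x y _ _ hx hy => rw [LinearMap.comp_add, map_add, hx, hy, add_zero]
    | smul a x _ hx => rw [LinearMap.comp_smul, map_smul, hx, smul_zero]
  exact key A (hp A hA)

/-- rank one maps -/
def br_R {n : ℕ} (y w : Euc n) : Euc n →ₗ[ℝ] Euc n :=
  ((InnerProductSpace.rankOne ℝ w y : Euc n →L[ℝ] Euc n) : Euc n →ₗ[ℝ] Euc n)

lemma br_repr {n : ℕ} (f : (Euc n →ₗ[ℝ] Euc n) →ₗ[ℝ] ℝ) :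
    ∃ A : Euc n →ₗ[ℝ] Euc n, A.IsSymmetric ∧ (∀ y, f (projMap y) = ⟪y, A y⟫) ∧
      f LinearMap.id = LinearMap.trace ℝ _ A := by
  let b := EuclideanSpace.basisFun (Fin n) ℝ
  let A : Euc n →ₗ[ℝ] Euc n :=
    { toFun := fun y => ∑ j, ((f (br_R y (b j)) + f (br_R (b j) y)) / 2) • b j
      map_add' := by
        intro x y
        rw [← Finset.sum_add_distrib]
        refine Finset.sum_congr rfl fun j _ => ?_
        have h1 : br_R (x + y) (b j) = br_R x (b j) + br_R y (b j) := by
          ext; simp [br_R, inner_add_left, add_mul]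
        have h2 : br_R (b j) (x + y) = br_R (b j) x + br_R (b j) y := by
          ext; simp [br_R, mul_add]
        rw [h1, h2, map_add, map_add, ← add_smul]
        congr 1; ring
      map_smul' := by
        intro c x
        simp only [RingHom.id_apply]
        rw [Finset.smul_sum]
        refine Finset.sum_congr rfl fun j _ => ?_
        have h1 : br_R (c • x) (b j) = c • br_R x (b j) := by
          ext; simp [br_R, inner_smul_left, mul_assoc]
        have h2 : br_R (b j) (c • x) = c • br_R (b j) x := by
          ext; simp [br_R, mul_left_comm]
        rw [h1, h2, map_smul, map_smul, smul_smul]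
        congr 1; simp only [smul_eq_mul]; ring }
  have hA : ∀ y w, ⟪A y, w⟫ = (f (br_R y w) + f (br_R w y)) / 2 := by
    intro y w
    have h1 : br_R y w = ∑ j, ⟪b j, w⟫ • br_R y (b j) := by
      conv_lhs => rw [← b.sum_repr' w]
      ext; simp [br_R]
    have h2 : br_R w y = ∑ j, ⟪b j, w⟫ • br_R (b j) y := by
      conv_lhs => rw [← b.sum_repr' w]
      ext; simp only [br_R, map_sum, map_smul]; simp [sum_inner, inner_smul_left]
    rw [h1, h2]
    simp only [map_sum, map_smul, A, LinearMap.coe_mk, AddHom.coe_mk, sum_inner, inner_smul_left,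
      smul_eq_mul, ← Finset.sum_add_distrib, Finset.sum_div]
    refine Finset.sum_congr rfl fun j _ => ?_
    simp only [conj_trivial]
    ring
  have hR : ∀ y : Euc n, br_R y y = projMap y := by
    intro y
    ext u
    simp [br_R, projMap, real_inner_comm]
  have hP : ∀ y, f (projMap y) = ⟪y, A y⟫ := by
    intro y
    rw [real_inner_comm, hA, hR]; ring
  refine ⟨A, ?_, hP, ?_⟩
  · intro x y
    rw [hA, real_inner_comm, hA]; ring
  · rw [LinearMap.trace_eq_sum_inner _ b]
    simp_rw [← hP]
    rw [← map_sum]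
    congr 1
    have := br_decomp (LinearMap.id) b (fun _ => 1) (by simp)
    simpa using this

lemma br_neg {n : ℕ} (A : Euc n →ₗ[ℝ] Euc n) (hA : A.IsSymmetric) : (-A).IsSymmetric := by
  intro x y
  simp [hA x y]

lemma br_noDesc_perfect {n : ℕ} (S : Set (Euc n)) (h : NoDesc S) : IsPerfectCfg S := by
  intro T hT
  by_contra hc
  obtain ⟨f, hf, hker⟩ := Submodule.exists_le_ker_of_notMem hc
  obtain ⟨A, hA, hP, htr⟩ := br_repr f
  have h0 : ∀ y ∈ S, ⟪y, A y⟫ = 0 := by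
    intro y hy
    rw [← hP]
    exact hker (Submodule.subset_span ⟨y, hy, rfl⟩)
  have hA0 : A = 0 := by
    rcases le_total (LinearMap.trace ℝ _ A) 0 with h1 | h1
    · exact h A hA h1 fun y hy => (h0 y hy).ge
    · have := h (-A) (br_neg A hA) (by rw [map_neg]; linarith) fun y hy => by
        simp [h0 y hy]
      simpa using this
  apply hf
  obtain ⟨b, l, hbl⟩ := br_spec T hT
  rw [br_decomp T b l hbl]
  simp [hP, hA0]

lemma br_noDesc_eutactic {n : ℕ} (S : Set (Euc n)) (hfin : S.Finite) (hsym : ∀ x ∈ S, -x ∈ S)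
    (h : NoDesc S) : IsEutacticCfg S := by
  classical
  have hperf := br_noDesc_perfect S h
  have : Fintype S := hfin.fintype
  let L : (S → ℝ) →ₗ[ℝ] (Euc n →ₗ[ℝ] Euc n) := Fintype.linearCombination ℝ (fun y : S => projMap y.1)
  have hL : ∀ c, L c = ∑ y, c y • projMap y.1 := fun c => rfl
  have hid : ∃ c0, L c0 = LinearMap.id := by
    have := hperf LinearMap.id LinearMap.IsSymmetric.id
    have h2 : LinearMap.range L = Submodule.span ℝ (projMap '' S) := by
      rw [Fintype.range_linearCombination, Set.image_eq_range]
    rw [← h2] at this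
    exact this
  obtain ⟨c0, hc0⟩ := hid
  have main : ∃ c : S → ℝ, (∀ y, 0 < c y) ∧ L c = LinearMap.id := by
    by_contra hc
    push Not at hc
    let O : Set (S → ℝ) := Set.pi Set.univ (fun _ => Set.Ioi 0)
    let Af : Set (S → ℝ) := {c | L c = LinearMap.id}
    have hOo : IsOpen O := isOpen_set_pi Set.finite_univ fun _ _ => isOpen_Ioi
    have hOc : Convex ℝ O := convex_pi fun _ _ => convex_Ioi 0
    have hAc : Convex ℝ Af := by
      intro x hx y hy a b _ _ hab
      simp only [Af, Set.mem_ofPred_eq] at *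
      rw [map_add, map_smul, map_smul, hx, hy, ← add_smul, hab, one_smul]
    have hdis : Disjoint O Af := by
      rw [Set.disjoint_left]
      intro c hcO hcA
      exact hc c (fun y => hcO y (Set.mem_univ _)) hcA
    obtain ⟨f, s, hfO, hfA⟩ := geometric_hahn_banach_open hOc hOo hAc hdis
    -- f vanishes on ker
    have hker : ∀ k, L k = 0 → f k = 0 := by
      intro k hk
      by_contra hfk
      have := hfA (c0 + ((s - 1 - f c0) / f k) • k) (by
        simp [Af, hc0, hk])
      rw [map_add, map_smul, smul_eq_mul, div_mul_cancel₀ _ hfk] at this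
      linarith
    have hg : ∃ g : (Euc n →ₗ[ℝ] Euc n) →ₗ[ℝ] ℝ, g ∘ₗ L = f.toLinearMap := by
      have : f.toLinearMap ∈ LinearMap.range L.dualMap := by
        rw [LinearMap.range_dualMap_eq_dualAnnihilator_ker, Submodule.mem_dualAnnihilator]
        intro w hw
        exact hker w hw
      exact this
    obtain ⟨g, hg⟩ := hg
    have hg' : ∀ c, g (L c) = f c := fun c => by
      have := congrArg (fun φ => φ c) hg
      simpa using this
    obtain ⟨A, hA, hP, htr⟩ := br_repr g
    have hone : (fun _ => (1 : ℝ)) ∈ O := fun _ _ => by simp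
    -- s ≥ 0
    have hs : 0 ≤ s := by
      by_contra hs
      push Not at hs
      have h1 := hfO _ hone
      have h2 : (s / f (fun _ => (1 : ℝ))) • (fun _ : S => (1 : ℝ)) ∈ O := by
        intro y _
        simp only [Pi.smul_apply, smul_eq_mul, mul_one, Set.mem_Ioi]
        exact div_pos_of_neg_of_neg hs (h1.trans hs)
      have h3 := hfO _ h2
      rw [map_smul, smul_eq_mul, div_mul_cancel₀ _ (h1.trans hs).ne] at h3
      exact lt_irrefl _ h3
    have hy : ∀ y : S, f (Pi.single y 1) ≤ 0 := by
      intro y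
      by_contra hpos
      push Not at hpos
      set q := f (Pi.single y 1) with hq
      have h1 := hfO _ hone
      let a := (|s - f (fun _ => (1 : ℝ))|) / q
      have ha : 0 ≤ a := by positivity
      have h3 := hfO ((fun _ => (1 : ℝ)) + a • Pi.single y 1) (by
        intro z _
        simp only [Pi.add_apply, Pi.smul_apply, smul_eq_mul, Set.mem_Ioi]
        have : 0 ≤ (Pi.single y (1 : ℝ) : S → ℝ) z := by
          rw [Pi.single_apply]; split_ifs <;> norm_num
        positivity)
      rw [map_add, map_smul, smul_eq_mul, ← hq, div_mul_cancel₀ _ hpos.ne'] at h3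
      have := le_abs_self (s - f (fun _ => (1 : ℝ)))
      linarith
    have hsingle : ∀ y : S, f (Pi.single y 1) = ⟪y.1, A y.1⟫ := by
      intro y
      rw [← hg', ← hP]
      congr 1
      rw [hL, Finset.sum_eq_single y]
      · simp
      · intro z _ hz
        simp [Pi.single_apply, hz]
      · simp
    have hA0 := h (-A) (br_neg A hA) (by
      rw [map_neg, ← htr, ← hc0, hg']
      have := hfA c0 hc0
      linarith) (by
      intro y hyS
      have := hy ⟨y, hyS⟩
      rw [hsingle] at this
      simpa using this)
    have hA0' : A = 0 := by simpa using hA0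
    have hf0 : ∀ c, f c = 0 := by
      intro c
      rw [← hg', hL]
      simp [hP, hA0']
    have e1 := hfO _ hone
    have e2 := hfA c0 hc0
    rw [hf0] at e1 e2
    linarith
  obtain ⟨c, hcpos, hcid⟩ := main
  let c' : Euc n → ℝ := fun x => if hx : x ∈ S then c ⟨x, hx⟩ else 0
  have hc'pos : ∀ x ∈ S, 0 < c' x := fun x hx => by simp [c', hx, hcpos]
  have hc'z : ∀ x ∉ S, c' x = 0 := fun x hx => by simp [c', hx]
  have hneg : ∀ x, -x ∈ S ↔ x ∈ S := fun x => ⟨fun hx => by simpa using hsym _ hx, hsym x⟩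
  have hsumc : ∑ x ∈ hfin.toFinset, c' x • projMap x = LinearMap.id := by
    rw [← hcid, hL]
    rw [← Finset.sum_coe_sort]
    refine Fintype.sum_equiv (Equiv.subtypeEquivRight (fun x => by simp)) _ _ ?_
    intro x
    have hx : x.1 ∈ S := by simpa using x.2
    simp only [c', hx, dite_true]
    rfl
  have hpn : ∀ x : Euc n, projMap (-x) = projMap x := by
    intro x; ext u; simp [projMap]
  have hsumc2 : ∑ x ∈ hfin.toFinset, c' (-x) • projMap x = LinearMap.id := by
    rw [← hsumc]
    refine Finset.sum_nbij' (fun x => -x) (fun x => -x) ?_ ?_ ?_ ?_ ?_ <;> simp [hneg, hpn]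
  refine ⟨fun x => (c' x + c' (-x)) / 2, ?_, ?_, ?_, ?_, ?_⟩
  · intro x hx
    have := hc'pos x hx
    have := hc'pos _ (hsym x hx)
    positivity
  · intro x hx
    simp [hc'z x hx, hc'z (-x) (by rwa [hneg])]
  · refine hfin.subset ?_
    intro x hx
    by_contra hc
    apply hx
    simp [hc'z x hc, hc'z (-x) (by rwa [hneg])]
  · intro x; simp [add_comm]
  · rw [finsum_eq_sum_of_support_subset (s := hfin.toFinset)]
    · have : ∀ x, ((c' x + c' (-x)) / 2) • projMap x
          = (1 / 2 : ℝ) • (c' x • projMap x) + (1 / 2 : ℝ) • (c' (-x) • projMap x) := by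
        intro x
        rw [smul_smul, smul_smul, ← add_smul]
        congr 1; ring
      simp_rw [this]
      rw [Finset.sum_add_distrib, ← Finset.smul_sum, ← Finset.smul_sum, hsumc, hsumc2, ← add_smul]
      norm_num
    · intro x hx
      by_contra hc
      apply hx
      have hc : x ∉ S := by simpa using hc
      simp [hc'z x hc, hc'z (-x) (by rwa [hneg])]

lemma br_noDesc_extreme {n : ℕ} (S : Set (Euc n)) (hfin : S.Finite) (hsym : ∀ x ∈ S, -x ∈ S)
    (h : NoDesc S) : IsExtremeCfg S :=
  ⟨br_noDesc_perfect S h, br_noDesc_eutactic S hfin hsym h⟩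

/-- The integer vector as a point of the space. -/
def zvec {n : ℕ} (z : Fin n → ℤ) : Euc n := ∑ i, (z i : ℝ) • EuclideanSpace.single i 1

lemma zvec_apply {n : ℕ} (z : Fin n → ℤ) (i : Fin n) : zvec z i = z i := by
  simp [zvec, Finset.sum_apply, Pi.single_apply]

lemma mem_latticeSet {n : ℕ} (T : Euc n →ₗ[ℝ] Euc n) (v : Euc n) :
    v ∈ latticeSet T ↔ ∃ z, v = T (zvec z) := Iff.rfl

lemma zvec_single {n : ℕ} (j : Fin n) : zvec (Pi.single j 1) = EuclideanSpace.single j (1 : ℝ) := by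
  ext i
  rw [zvec_apply]
  by_cases h : i = j
  · subst h; simp
  · simp [h]

lemma zvec_sub {n : ℕ} (z w : Fin n → ℤ) : zvec (z - w) = zvec z - zvec w := by
  ext i; simp [zvec_apply]

lemma zvec_neg {n : ℕ} (z : Fin n → ℤ) : zvec (-z) = - zvec z := by
  ext i; simp [zvec_apply]

lemma lat_factor {n : ℕ} (T T' : Euc n →ₗ[ℝ] Euc n) (h : latticeSet T' ⊆ latticeSet T) :
    ∃ m : ℤ, LinearMap.det T' = LinearMap.det T * m := by
  let s := (EuclideanSpace.basisFun (Fin n) ℝ).toBasis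
  have h1 : ∀ j, ∃ z : Fin n → ℤ, T' (EuclideanSpace.single j 1) = T (zvec z) := by
    intro j
    exact h ⟨Pi.single j 1, by rw [← zvec_single]; rfl⟩
  choose z hz using h1
  let M : Matrix (Fin n) (Fin n) ℤ := Matrix.of fun i j => z j i
  refine ⟨M.det, ?_⟩
  have h2 : T' = T ∘ₗ Matrix.toLin s s (M.map (Int.castRingHom ℝ)) := by
    apply s.ext
    intro j
    rw [LinearMap.comp_apply, Matrix.toLin_self]
    simp only [s, OrthonormalBasis.coe_toBasis, EuclideanSpace.basisFun_apply, hz]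
    simp [zvec, M]
  rw [h2, LinearMap.det_comp, LinearMap.det_toLin]
  congr 1
  have := (RingHom.map_det (Int.castRingHom ℝ) M).symm
  exact this

lemma lat_det_unique {n : ℕ} (T T' : Euc n →ₗ[ℝ] Euc n) (hT : LinearMap.det T ≠ 0)
    (h : latticeSet T = latticeSet T') : |LinearMap.det T'| = |LinearMap.det T| := by
  obtain ⟨m, hm⟩ := lat_factor T T' h.symm.subset
  obtain ⟨k, hk⟩ := lat_factor T' T h.subset
  have h1 : (m : ℝ) * k = 1 := by
    rw [hm, mul_assoc] at hk
    have := mul_left_cancel₀ hT (show LinearMap.det T * ((m : ℝ) * k) = LinearMap.det T * 1 by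
      rw [mul_one]; exact hk.symm)
    exact this
  have h2 : m * k = 1 := by exact_mod_cast h1
  have h3 : |m| = 1 := Int.isUnit_iff_abs_eq.1 (IsUnit.of_mul_eq_one k h2)
  rw [hm, abs_mul]
  have : |(m : ℝ)| = 1 := by exact_mod_cast h3
  rw [this, mul_one]

lemma latDet_eq {n : ℕ} (T : Euc n →ₗ[ℝ] Euc n) (hT : LinearMap.det T ≠ 0) :
    latDet (latticeSet T) = |LinearMap.det T| := by
  have : {d | ∃ T' : Euc n →ₗ[ℝ] Euc n, latticeSet T = latticeSet T' ∧ d = |LinearMap.det T'|}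
      = {|LinearMap.det T|} := by
    ext d
    constructor
    · rintro ⟨T', h, rfl⟩
      exact lat_det_unique T T' hT h
    · rintro rfl
      exact ⟨T, rfl, rfl⟩
  rw [latDet, this, csInf_singleton]

lemma latticeSet_comp {n : ℕ} (G T : Euc n →ₗ[ℝ] Euc n) :
    latticeSet (G ∘ₗ T) = G '' latticeSet T := by
  ext v
  constructor
  · rintro ⟨z, rfl⟩
    exact ⟨T (zvec z), ⟨z, rfl⟩, rfl⟩
  · rintro ⟨w, ⟨z, rfl⟩, rfl⟩
    exact ⟨z, rfl⟩

lemma lat_inj {n : ℕ} (T : Euc n →ₗ[ℝ] Euc n) (hT : LinearMap.det T ≠ 0) : LinearMap.ker T = ⊥ := by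
  by_contra h
  exact hT (LinearMap.det_eq_zero_iff_ker_ne_bot.2 h)

lemma lat_finite {n : ℕ} (T : Euc n →ₗ[ℝ] Euc n) (hT : LinearMap.det T ≠ 0) (r : ℝ) :
    {v | v ∈ latticeSet T ∧ ‖v‖ ≤ r}.Finite := by
  obtain ⟨C, hC, hanti⟩ := LinearMap.exists_antilipschitzWith T (lat_inj T hT)
  let N : ℤ := ⌈(C : ℝ) * r⌉
  have hfin : (Set.pi Set.univ (fun _ : Fin n => Set.Icc (-N) N)).Finite :=
    Set.Finite.pi fun _ => Set.finite_Icc _ _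
  refine (hfin.image (fun z => T (zvec z))).subset ?_
  rintro v ⟨⟨z, rfl⟩, hv⟩
  refine ⟨z, ?_, rfl⟩
  intro i _
  have h1 : ‖zvec z‖ ≤ C * ‖T (zvec z)‖ := by
    simpa using hanti.le_mul_dist (zvec z) 0
  have h2 : |(z i : ℝ)| ≤ ‖zvec z‖ := by
    have := PiLp.norm_apply_le (zvec z) i
    rwa [zvec_apply, Real.norm_eq_abs] at this
  have h3 : |(z i : ℝ)| ≤ N := by
    refine (h2.trans h1).trans (le_trans ?_ (Int.le_ceil _))
    exact mul_le_mul_of_nonneg_left hv C.2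
  have h4 : |z i| ≤ N := by exact_mod_cast h3
  exact abs_le.1 h4

lemma latDet_nonneg {n : ℕ} (Λ : Set (Euc n)) : 0 ≤ latDet Λ := by
  apply Real.sInf_nonneg
  rintro _ ⟨T, _, rfl⟩
  exact abs_nonneg _

lemma critDet_bdd {n : ℕ} (K : Set (Euc n)) :
    BddBelow {d | ∃ Λ : Set (Euc n), IsLattice Λ ∧ IsAdmissible Λ K ∧ d = latDet Λ} := by
  refine ⟨0, ?_⟩
  rintro _ ⟨Λ, _, _, rfl⟩
  exact latDet_nonneg _

lemma critDet_le {n : ℕ} (K : Set (Euc n)) (T : Euc n →ₗ[ℝ] Euc n) (hT : LinearMap.det T ≠ 0)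
    (h : IsAdmissible (latticeSet T) K) : critDet K ≤ |LinearMap.det T| := by
  rw [← latDet_eq T hT]
  exact csInf_le (critDet_bdd K) ⟨_, ⟨T, hT, rfl⟩, h, rfl⟩

lemma exists_of_critDet_lt {n : ℕ} (K : Set (Euc n)) (T₀ : Euc n →ₗ[ℝ] Euc n)
    (hT₀ : LinearMap.det T₀ ≠ 0)
    (h₀ : IsAdmissible (latticeSet T₀) K) (a : ℝ) (h : critDet K < a) :
    ∃ T : Euc n →ₗ[ℝ] Euc n, LinearMap.det T ≠ 0 ∧ IsAdmissible (latticeSet T) K ∧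
      |LinearMap.det T| < a := by
  obtain ⟨d, ⟨Λ, ⟨T, hT, rfl⟩, hadm, rfl⟩, hd⟩ :=
    exists_lt_of_csInf_lt (s := {d | ∃ Λ : Set (Euc n), IsLattice Λ ∧ IsAdmissible Λ K ∧
      d = latDet Λ}) ⟨_, ⟨_, ⟨T₀, hT₀, rfl⟩, h₀, rfl⟩⟩ h
  exact ⟨T, hT, hadm, by rwa [latDet_eq T hT] at hd⟩

lemma interior_unitBall {n : ℕ} (hn : 2 ≤ n) : interior (unitBall n) = Metric.ball 0 1 := by
  have : Nonempty (Fin n) := ⟨⟨0, by omega⟩⟩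
  exact interior_closedBall _ one_ne_zero

lemma adm_ball {n : ℕ} (hn : 2 ≤ n) (Λ : Set (Euc n)) :
    IsAdmissible Λ (unitBall n) ↔ ∀ v ∈ Λ, v ≠ 0 → 1 ≤ ‖v‖ := by
  unfold IsAdmissible
  rw [interior_unitBall hn]
  constructor
  · intro h v hv h0
    by_contra hc
    push Not at hc
    exact h0 (h ⟨hv, by simpa using hc⟩)
  · rintro h v ⟨hv, hb⟩
    by_contra h0
    have := h v hv h0
    simp at hb
    linarith

lemma adm_mono {n : ℕ} {Λ K K' : Set (Euc n)} (h : K ⊆ K') (ha : IsAdmissible Λ K') :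
    IsAdmissible Λ K := fun _ hv => ha ⟨hv.1, interior_mono h hv.2⟩

lemma minVecs_norm {n : ℕ} {Λ : Set (Euc n)} (hmin : minNorm Λ = 1) {x : Euc n}
    (hx : x ∈ minVecs Λ) : ‖x‖ = 1 := by
  have := hx.2.2
  rw [hmin] at this
  have h0 := norm_nonneg x
  nlinarith

lemma minVecs_finite {n : ℕ} {Λ : Set (Euc n)} (hL : IsLattice Λ) (hmin : minNorm Λ = 1) :
    (minVecs Λ).Finite := by
  obtain ⟨T, hT, rfl⟩ := hL
  exact (lat_finite T hT 1).subset fun x hx => ⟨hx.1, (minVecs_norm hmin hx).le⟩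

lemma lat_neg {n : ℕ} {T : Euc n →ₗ[ℝ] Euc n} {x : Euc n} (hx : x ∈ latticeSet T) :
    -x ∈ latticeSet T := by
  obtain ⟨z, rfl⟩ := hx
  refine ⟨-z, ?_⟩
  change -(T (zvec z)) = T (zvec (-z))
  rw [zvec_neg, map_neg]

lemma minVecs_neg {n : ℕ} {Λ : Set (Euc n)} (hL : IsLattice Λ) {x : Euc n} (hx : x ∈ minVecs Λ) :
    -x ∈ minVecs Λ := by
  obtain ⟨T, hT, rfl⟩ := hL
  exact ⟨lat_neg hx.1, by simpa using hx.2.1, by simpa using hx.2.2⟩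

lemma isom_det {n : ℕ} (U : Euc n ≃ₗᵢ[ℝ] Euc n) :
    |LinearMap.det (U.toLinearEquiv : Euc n →ₗ[ℝ] Euc n)| = 1 := by
  let s := EuclideanSpace.basisFun (Fin n) ℝ
  have h1 := Module.Basis.det_comp s.toBasis (U.toLinearEquiv : Euc n →ₗ[ℝ] Euc n) s
  have h2 := s.det_to_matrix_orthonormalBasis (s.map U)
  have h3 : s.toBasis.det s = 1 := by
    have := s.toBasis.det_self
    simpa using this
  rw [h3, mul_one] at h1
  rw [← h1, ← Real.norm_eq_abs, ← h2]
  rfl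

lemma br_forward {n : ℕ} (hn : 2 ≤ n) (Λ : Set (Euc n))
    (hcrit : IsCriticalLattice Λ (unitBall n)) (hmin : minNorm Λ = 1)
    (K : Set (Euc n)) (hK : IsClosed K) (hKB : K ⊆ unitBall n)
    (hd : critDet K = critDet (unitBall n)) (U : Euc n ≃ₗᵢ[ℝ] Euc n) (S' : Set (Euc n))
    (hU : ∀ v ∈ minVecs Λ, v ∉ S' → U v ∉ K) : NoDesc (S' ∩ minVecs Λ) := by
  intro A hA htr hS
  by_contra hA0
  obtain ⟨hL, hadm, hdet⟩ := hcrit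
  have hfinS := minVecs_finite hL hmin
  obtain ⟨T, hT, rfl⟩ := hL
  rw [latDet_eq T hT] at hdet
  rw [adm_ball hn] at hadm
  obtain ⟨b, l, hbl⟩ := br_spec A hA
  have htr' := br_trace A b l hbl
  let A' : Euc n →L[ℝ] Euc n := LinearMap.toContinuousLinearMap A
  have hcont : ∀ v, Filter.Tendsto (fun t : ℝ => v + t • A v) (nhdsWithin 0 (Set.Ioi 0)) (nhds v) := by
    intro v
    have : Continuous (fun t : ℝ => v + t • A v) := by fun_prop
    have h2 := this.tendsto 0
    simp only [zero_smul, add_zero] at h2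
    exact h2.mono_left nhdsWithin_le_nhds
  -- finitely many short vectors
  have e1 : ∀ᶠ t in nhdsWithin (0:ℝ) (Set.Ioi 0),
      ∀ v ∈ {v | v ∈ latticeSet T ∧ ‖v‖ ≤ 2}, v ≠ 0 → U (v + t • A v) ∉ interior K := by
    rw [Filter.eventually_all_finite (lat_finite T hT 2)]
    rintro v ⟨hv, hv2⟩
    by_cases h0 : v = 0
    · simp [h0]
    by_cases hvS : v ∈ minVecs (latticeSet T)
    · by_cases hvS' : v ∈ S'
      · filter_upwards [self_mem_nhdsWithin] with t ht _ hc
        have h1 := interior_mono hKB hc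
        rw [interior_unitBall hn] at h1
        have h2 := hS v ⟨hvS', hvS⟩
        have h3 := minVecs_norm hmin hvS
        simp only [mem_ball_zero_iff, U.norm_map] at h1
        have h4 : ‖v + t • A v‖ ^ 2 = ‖v‖ ^ 2 + 2 * (t * ⟪v, A v⟫) + ‖t • A v‖ ^ 2 := by
          rw [norm_add_sq_real, inner_smul_right]
        have h5 : 0 ≤ t * ⟪v, A v⟫ := mul_nonneg (le_of_lt ht) h2
        have h6 := norm_nonneg (v + t • A v)
        have h7 := sq_nonneg ‖t • A v‖
        rw [h3] at h4
        nlinarith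
      · have h1 := ((U.continuous.tendsto v).comp (hcont v)).eventually
          (hK.isOpen_compl.mem_nhds (hU v hvS hvS'))
        filter_upwards [h1] with t ht _ hc
        exact ht (interior_subset hc)
    · have h1 : 1 < ‖v‖ := by
        refine lt_of_le_of_ne (hadm v hv h0) ?_
        intro h
        apply hvS
        refine ⟨hv, h0, ?_⟩
        rw [hmin, ← h]; norm_num
      have h2 := ((hcont v).norm).eventually (lt_mem_nhds h1)
      filter_upwards [h2] with t ht _ hc
      have h1 := interior_mono hKB hc
      rw [interior_unitBall hn] at h1
      simp only [mem_ball_zero_iff, U.norm_map] at h1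
      linarith
  have e2 : ∀ᶠ t in nhdsWithin (0:ℝ) (Set.Ioi 0), t * ‖A'‖ < 1 / 2 := by
    have : Continuous (fun t : ℝ => t * ‖A'‖) := by fun_prop
    have h2 := this.tendsto 0
    rw [zero_mul] at h2
    exact (h2.mono_left nhdsWithin_le_nhds).eventually (gt_mem_nhds (by norm_num))
  have e3 : ∀ᶠ t in nhdsWithin (0:ℝ) (Set.Ioi 0), ∀ i, 0 < 1 + t * l i := by
    rw [Filter.eventually_all]
    intro i
    have : Continuous (fun t : ℝ => 1 + t * l i) := by fun_prop
    have h2 := this.tendsto 0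
    rw [zero_mul, add_zero] at h2
    exact (h2.mono_left nhdsWithin_le_nhds).eventually (lt_mem_nhds (by norm_num))
  have e0 : ∀ᶠ t in nhdsWithin (0:ℝ) (Set.Ioi 0), t ∈ Set.Ioi (0:ℝ) := self_mem_nhdsWithin
  obtain ⟨t, ht, h1, h2, h3⟩ :=
    (e0.and (e1.and (e2.and e3))).exists
  have ht : 0 < t := ht
  let G : Euc n →ₗ[ℝ] Euc n := LinearMap.id + t • A
  have hG : LinearMap.det G = ∏ i, (1 + t * l i) := br_det A b l hbl t
  have hGpos : 0 < LinearMap.det G := by rw [hG]; exact Finset.prod_pos fun i _ => h3 i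
  have hGlt : LinearMap.det G < 1 := by
    have hne : ∃ i, l i ≠ 0 := by
      by_contra hc
      push Not at hc
      exact hA0 (br_zero A b l hbl hc)
    obtain ⟨i, hi⟩ := hne
    have : LinearMap.det G < ∏ i, Real.exp (t * l i) := by
      rw [hG]
      refine Finset.prod_lt_prod (fun i _ => h3 i) (fun i _ => ?_) ⟨i, Finset.mem_univ _, ?_⟩
      · have := Real.add_one_le_exp (t * l i); linarith
      · have := Real.add_one_lt_exp (mul_ne_zero ht.ne' hi); linarith
    refine this.trans_le ?_
    rw [← Real.exp_sum, Real.exp_le_one_iff, ← Finset.mul_sum, ← htr']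
    exact mul_nonpos_of_nonneg_of_nonpos ht.le htr
  let T' : Euc n →ₗ[ℝ] Euc n := ((U.toLinearEquiv : Euc n →ₗ[ℝ] Euc n) ∘ₗ G) ∘ₗ T
  have hT' : |LinearMap.det T'| = LinearMap.det G * |LinearMap.det T| := by
    rw [LinearMap.det_comp, LinearMap.det_comp, abs_mul, abs_mul, isom_det, one_mul, abs_of_pos hGpos]
  have hT'0 : LinearMap.det T' ≠ 0 := by
    rw [← abs_pos, hT']
    have := abs_pos.2 hT
    positivity
  have hadm' : IsAdmissible (latticeSet T') K := by
    rintro w ⟨hw, hwK⟩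
    rw [latticeSet_comp] at hw
    obtain ⟨v, hv, rfl⟩ := hw
    by_contra hw0
    have hv0 : v ≠ 0 := by
      rintro rfl
      exact hw0 (by simp)
    have hval : (((U.toLinearEquiv : Euc n →ₗ[ℝ] Euc n) ∘ₗ G) v) = U (v + t • A v) := rfl
    rw [hval] at hwK
    rcases le_or_gt ‖v‖ 2 with hle | hgt
    · exact h1 v ⟨hv, hle⟩ hv0 hwK
    · have h4 := interior_mono hKB hwK
      rw [interior_unitBall hn] at h4
      simp only [mem_ball_zero_iff, U.norm_map] at h4
      have h5 : ‖A v‖ ≤ ‖A'‖ * ‖v‖ := A'.le_opNorm v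
      have h6 : ‖v‖ ≤ ‖v + t • A v‖ + ‖t • A v‖ := by
        have := norm_sub_le (v + t • A v) (t • A v)
        simpa using this
      rw [norm_smul, Real.norm_eq_abs, abs_of_pos ht] at h6
      have h7 : t * ‖A v‖ ≤ (t * ‖A'‖) * ‖v‖ := by
        rw [mul_assoc]; exact mul_le_mul_of_nonneg_left h5 ht.le
      nlinarith
  have h8 := critDet_le K T' hT'0 hadm'
  rw [hd, ← hdet, hT'] at h8
  have := abs_pos.2 hT
  nlinarith

lemma br_trace_bound {n : ℕ} (S : Set (Euc n)) (h : NoDesc S) :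
    ∃ c : ℝ, 0 < c ∧ ∀ A : Euc n →L[ℝ] Euc n, (A : Euc n →ₗ[ℝ] Euc n).IsSymmetric →
      (∀ y ∈ S, 0 ≤ ⟪y, A y⟫) → c * ‖A‖ ≤ LinearMap.trace ℝ _ (A : Euc n →ₗ[ℝ] Euc n) := by
  let tr : (Euc n →L[ℝ] Euc n) →ₗ[ℝ] ℝ :=
    (LinearMap.trace ℝ (Euc n)) ∘ₗ (ContinuousLinearMap.coeLM ℝ)
  have htrdef : ∀ A : Euc n →L[ℝ] Euc n, tr A = LinearMap.trace ℝ _ (A : Euc n →ₗ[ℝ] Euc n) :=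
    fun A => rfl
  have htrc : Continuous tr := LinearMap.continuous_of_finiteDimensional tr
  let C : Set (Euc n →L[ℝ] Euc n) := {A | ‖A‖ = 1} ∩ ({A | ∀ x y, ⟪A x, y⟫ = ⟪x, A y⟫} ∩
    {A | ∀ y ∈ S, 0 ≤ ⟪y, A y⟫})
  have hC : IsCompact C := by
    have h1 : IsClosed C := by
      refine IsClosed.inter (isClosed_eq continuous_norm continuous_const) (IsClosed.inter ?_ ?_)
      · have : {A : Euc n →L[ℝ] Euc n | ∀ x y, ⟪A x, y⟫ = ⟪x, A y⟫}
          = ⋂ x, ⋂ y, {A : Euc n →L[ℝ] Euc n | ⟪A x, y⟫ = ⟪x, A y⟫} := by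
          ext; simp
        rw [this]
        refine isClosed_iInter fun x => isClosed_iInter fun y => isClosed_eq ?_ ?_ <;> fun_prop
      · have : {A : Euc n →L[ℝ] Euc n | ∀ y ∈ S, 0 ≤ ⟪y, A y⟫}
          = ⋂ y ∈ S, {A : Euc n →L[ℝ] Euc n | 0 ≤ ⟪y, A y⟫} := by
          ext; simp
        rw [this]
        refine isClosed_biInter fun y _ => isClosed_le ?_ ?_ <;> fun_prop
    refine (isCompact_closedBall (0 : Euc n →L[ℝ] Euc n) 1).of_isClosed_subset h1 ?_
    rintro A ⟨hA, _⟩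
    simpa using (show ‖A‖ = 1 from hA).le
  have hpos : ∀ A ∈ C, 0 < tr A := by
    rintro A ⟨hA1, hA2, hA3⟩
    by_contra hc
    push Not at hc
    have h0 := h (A : Euc n →ₗ[ℝ] Euc n) hA2 hc hA3
    have : A = 0 := by
      ext1 x
      exact congrArg (fun B => B x) h0
    rw [this] at hA1
    simp at hA1
  have key : ∃ c : ℝ, 0 < c ∧ ∀ A ∈ C, c ≤ tr A := by
    rcases C.eq_empty_or_nonempty with he | hne
    · exact ⟨1, one_pos, by simp [he]⟩
    · obtain ⟨A, hA, hmin⟩ := hC.exists_isMinOn hne htrc.continuousOn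
      exact ⟨tr A, hpos A hA, fun B hB => hmin hB⟩
  obtain ⟨c, hc, hcC⟩ := key
  refine ⟨c, hc, fun A hA hS => ?_⟩
  by_cases h0 : A = 0
  · simp [h0]
  have hn0 : 0 < ‖A‖ := norm_pos_iff.2 h0
  have := hcC (‖A‖⁻¹ • A) ⟨by simp [norm_smul, hn0.ne'], fun x y => by
      have := hA x y
      simp only [ContinuousLinearMap.coe_coe] at this
      simp [inner_smul_left, inner_smul_right, this], fun y hy => by
      have := hS y hy
      simp only [ContinuousLinearMap.smul_apply, inner_smul_right]
      positivity⟩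
  rw [map_smul, smul_eq_mul, htrdef] at this
  rw [← div_eq_inv_mul, le_div_iff₀ hn0] at this
  exact this

lemma exp_bound {x : ℝ} (hx : |x| ≤ 1 / 2) : Real.exp (x - 2 * x ^ 2) ≤ 1 + x := by
  obtain ⟨h1, h2⟩ := abs_le.1 hx
  have hpos : 0 < 1 + x := by linarith
  rw [← Real.le_log_iff_exp_le hpos]
  have h3 : Real.log ((1 + x)⁻¹) ≤ (1 + x)⁻¹ - 1 := Real.log_le_sub_one_of_pos (by positivity)
  rw [Real.log_inv] at h3
  have h4 : (1 + x)⁻¹ ≤ 1 - x + 2 * x ^ 2 := by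
    rw [inv_le_iff_one_le_mul₀ hpos]
    nlinarith [mul_nonneg (sq_nonneg x) (show 0 ≤ 1 + 2 * x by linarith)]
  linarith

lemma br_local {n : ℕ} (S : Set (Euc n)) (h : NoDesc S) (hS : ∀ y ∈ S, ‖y‖ = 1) :
    ∀ᶠ G : Euc n →L[ℝ] Euc n in nhds 1, (∀ y ∈ S, 1 ≤ ‖G y‖) →
      1 ≤ |LinearMap.det (G : Euc n →ₗ[ℝ] Euc n)| := by
  obtain ⟨c, hc, htr⟩ := br_trace_bound S h
  let F : (Euc n →L[ℝ] Euc n) → (Euc n →L[ℝ] Euc n) :=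
    fun G => (ContinuousLinearMap.adjoint G) * G - 1
  have hF : Continuous F := by
    have h1 : Continuous (fun G : Euc n →L[ℝ] Euc n => ContinuousLinearMap.adjoint G) :=
      (ContinuousLinearMap.adjoint : (Euc n →L[ℝ] Euc n) ≃ₗᵢ⋆[ℝ] (Euc n →L[ℝ] Euc n)).continuous
    exact (h1.mul continuous_id).sub continuous_const
  have hF1 : F 1 = 0 := by
    have : ContinuousLinearMap.adjoint (1 : Euc n →L[ℝ] Euc n) = 1 := by
      rw [← ContinuousLinearMap.star_eq_adjoint, star_one]
    simp [F, this]
  have hT := (hF.tendsto 1).norm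
  rw [hF1, norm_zero] at hT
  have hev := hT.eventually (gt_mem_nhds (show (0 : ℝ) < min (1 / 2) (c / (2 * (n + 1))) by positivity))
  filter_upwards [hev] with G hG hGS
  obtain ⟨hG1, hG2⟩ := lt_min_iff.1 hG
  have hFi : ∀ x y, ⟪F G x, y⟫ = ⟪G x, G y⟫ - ⟪x, y⟫ := by
    intro x y
    simp only [F, ContinuousLinearMap.sub_apply, ContinuousLinearMap.mul_apply,
      ContinuousLinearMap.one_apply, inner_sub_left, ContinuousLinearMap.adjoint_inner_left]
  have hsym : (F G : Euc n →ₗ[ℝ] Euc n).IsSymmetric := by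
    intro x y
    simp only [ContinuousLinearMap.coe_coe]
    rw [hFi, real_inner_comm (F G y) x, hFi, real_inner_comm (G y) (G x), real_inner_comm y x]
  have htrG := htr (F G) hsym (by
    intro y hy
    rw [real_inner_comm, hFi, real_inner_self_eq_norm_sq, real_inner_self_eq_norm_sq, hS y hy]
    have := hGS y hy
    nlinarith)
  obtain ⟨b, l, hbl⟩ := br_spec _ hsym
  rw [br_trace _ b l hbl] at htrG
  have hdet := br_det _ b l hbl 1
  have hl : ∀ i, |l i| ≤ ‖F G‖ := by
    intro i
    have h1 := (F G).le_opNorm (b i)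
    have h2 := hbl i
    simp only [ContinuousLinearMap.coe_coe] at h2
    rw [h2, norm_smul] at h1
    simpa using h1
  have hdet2 : LinearMap.det (LinearMap.id + (1 : ℝ) • (F G : Euc n →ₗ[ℝ] Euc n))
      = LinearMap.det (G : Euc n →ₗ[ℝ] Euc n) ^ 2 := by
    have h1 : LinearMap.id + (1 : ℝ) • (F G : Euc n →ₗ[ℝ] Euc n)
        = (LinearMap.adjoint (G : Euc n →ₗ[ℝ] Euc n)) ∘ₗ (G : Euc n →ₗ[ℝ] Euc n) := by
      apply LinearMap.ext
      intro x
      apply ext_inner_right ℝ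
      intro y
      simp only [LinearMap.add_apply, LinearMap.id_apply, LinearMap.smul_apply, one_smul,
        inner_add_left, ContinuousLinearMap.coe_coe, hFi, LinearMap.comp_apply,
        LinearMap.adjoint_inner_left]
      ring
    rw [h1]
    have h2 := LinearMap.normDet_sq (G : Euc n →ₗ[ℝ] Euc n)
    rw [LinearMap.normDet_eq_abs_det, sq_abs] at h2
    simpa using h2.symm
  rw [hdet2] at hdet
  have hge : 1 ≤ ∏ i, (1 + 1 * l i) := by
    have : ∏ i, Real.exp (l i - 2 * l i ^ 2) ≤ ∏ i, (1 + 1 * l i) := by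
      refine Finset.prod_le_prod (fun i _ => (Real.exp_pos _).le) fun i _ => ?_
      rw [one_mul]
      exact exp_bound ((hl i).trans hG1.le)
    refine le_trans ?_ this
    rw [← Real.exp_sum, Real.one_le_exp_iff, Finset.sum_sub_distrib, sub_nonneg]
    refine le_trans ?_ htrG
    calc ∑ i, 2 * l i ^ 2 ≤ ∑ i : Fin n, 2 * ‖F G‖ ^ 2 := by
          refine Finset.sum_le_sum fun i _ => ?_
          rw [← sq_abs]
          refine mul_le_mul_of_nonneg_left ?_ (by norm_num)
          exact pow_le_pow_left₀ (abs_nonneg _) (hl i) 2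
      _ = (2 * n * ‖F G‖) * ‖F G‖ := by simp; ring
      _ ≤ c * ‖F G‖ := by
          refine mul_le_mul_of_nonneg_right ?_ (norm_nonneg _)
          rw [lt_div_iff₀ (by positivity)] at hG2
          nlinarith [norm_nonneg (F G)]
  rw [← hdet] at hge
  rw [← one_le_sq_iff_one_le_abs]
  exact hge

lemma exists_orth_proj {F : Type} [NormedAddCommGroup F] [InnerProductSpace ℝ F]
    [FiniteDimensional ℝ F] (v : F) (hv : v ≠ 0) :
    ∃ π : F →ₗ[ℝ] ((ℝ ∙ v)ᗮ : Submodule ℝ F), Function.Surjective π ∧ π v = 0 ∧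
      ∀ u, ((π u : F)) = u - (⟪v, u⟫ / ‖v‖ ^ 2) • v := by
  have hv2 : ‖v‖ ^ 2 ≠ 0 := by
    have := norm_pos_iff.2 hv
    positivity
  have hmem : ∀ u, u - (⟪v, u⟫ / ‖v‖ ^ 2) • v ∈ (ℝ ∙ v)ᗮ := by
    intro u
    rw [Submodule.mem_orthogonal_singleton_iff_inner_right, inner_sub_right, inner_smul_right,
      real_inner_self_eq_norm_sq, div_mul_cancel₀ _ hv2, sub_self]
  refine ⟨{ toFun := fun u => ⟨_, hmem u⟩, map_add' := ?_, map_smul' := ?_ }, ?_, ?_, ?_⟩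
  · intro x y
    ext1
    simp only [inner_add_right, Submodule.coe_add, add_div, add_smul]
    abel
  · intro c x
    ext1
    simp only [inner_smul_right, Submodule.coe_smul, RingHom.id_apply, smul_sub, smul_smul,
      mul_div_assoc]
  · intro w
    refine ⟨w.1, ?_⟩
    ext1
    have := (Submodule.mem_orthogonal_singleton_iff_inner_right).1 w.2
    simp [this]
  · ext1
    simp [real_inner_self_eq_norm_sq, hv2, div_self]
  · intro u; rfl

lemma red_lemma (d : ℕ) : ∀ (F : Type) [NormedAddCommGroup F] [InnerProductSpace ℝ F]
    [FiniteDimensional ℝ F] (_ : Module.finrank ℝ F = d) (L : AddSubgroup F)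
    (_ : Submodule.span ℝ (L : Set F) = ⊤) (r : ℝ) (_ : 0 < r)
    (_ : ∀ v ∈ L, v ≠ 0 → r ≤ ‖v‖),
    ∃ (c : Fin d → F) (e : OrthonormalBasis (Fin d) ℝ F), (∀ j, c j ∈ L) ∧
      (∀ w ∈ L, ∃ z : Fin d → ℤ, w = ∑ j, z j • c j) ∧
      (∀ i j, j < i → ⟪e i, c j⟫ = 0) ∧ (∀ i, r / 2 ^ d ≤ ⟪e i, c i⟫) ∧
      ∀ i j, i < j → |⟪e i, c j⟫| ≤ ⟪e i, c i⟫ := by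
  induction d with
  | zero =>
    intro F _ _ _ hd L hL r hr hmin
    have hsub : Subsingleton F := Module.finrank_zero_iff.1 hd
    refine ⟨fun _ => 0, (stdOrthonormalBasis ℝ F).reindex (finCongr hd), fun j => j.elim0, ?_,
      fun i => i.elim0, fun i => i.elim0, fun i => i.elim0⟩
    intro w _
    exact ⟨fun _ => 0, Subsingleton.elim _ _⟩
  | succ d ih =>
    intro F _ _ _ hd L hL r hr hmin
    -- choice of an almost shortest vector
    have hne : ∃ v ∈ L, v ≠ 0 := by
      by_contra hc
      push Not at hc
      have : Submodule.span ℝ (L : Set F) = ⊥ := by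
        rw [Submodule.span_eq_bot]
        exact hc
      rw [this] at hL
      have h0 : Module.finrank ℝ F = 0 := by
        rw [← finrank_top ℝ F, ← hL, finrank_bot]
      omega
    let N : Set ℝ := {x | ∃ v ∈ L, v ≠ 0 ∧ x = ‖v‖}
    have hNne : N.Nonempty := by
      obtain ⟨v, hv, h0⟩ := hne
      exact ⟨_, v, hv, h0, rfl⟩
    have hNlb : r ∈ lowerBounds N := by
      rintro _ ⟨v, hv, h0, rfl⟩
      exact hmin v hv h0
    set m := sInf N with hm
    have hrm : r ≤ m := le_csInf hNne hNlb
    have hm0 : 0 < m := hr.trans_le hrm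
    have hmle : ∀ v ∈ L, v ≠ 0 → m ≤ ‖v‖ := fun v hv h0 => csInf_le ⟨r, hNlb⟩ ⟨v, hv, h0, rfl⟩
    obtain ⟨_, ⟨v, hvL, hv0, rfl⟩, hvm⟩ := exists_lt_of_csInf_lt hNne
      (show sInf N < 6 / 5 * m by rw [← hm]; linarith)
    have hvpos : 0 < ‖v‖ := norm_pos_iff.2 hv0
    obtain ⟨π, hsurj, hπv, hdec⟩ := exists_orth_proj v hv0
    have horth : ∀ w : ((ℝ ∙ v)ᗮ : Submodule ℝ F), ⟪v, (w : F)⟫ = 0 := fun w =>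
      (Submodule.mem_orthogonal_singleton_iff_inner_right).1 w.2
    have hnorm : ∀ u, ‖u‖ ^ 2 = (⟪v, u⟫ / ‖v‖) ^ 2 + ‖π u‖ ^ 2 := by
      intro u
      have h1 : u = (⟪v, u⟫ / ‖v‖ ^ 2) • v + (π u : F) := by rw [hdec]; abel
      conv_lhs => rw [h1]
      rw [norm_add_sq_real, inner_smul_left, horth, norm_smul, mul_pow, Real.norm_eq_abs, sq_abs]
      simp only [mul_zero, add_zero, Submodule.coe_norm]
      congr 1
      field_simp
    have hround : ∀ u ∈ L, ∃ u' ∈ L, π u' = π u ∧ |⟪v, u'⟫| ≤ ‖v‖ ^ 2 / 2 ∧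
        ∃ k : ℤ, u = u' + k • v := by
      intro u hu
      refine ⟨u - round (⟪v, u⟫ / ‖v‖ ^ 2) • v, L.sub_mem hu (L.zsmul_mem hvL _), ?_, ?_,
        round (⟪v, u⟫ / ‖v‖ ^ 2), by abel⟩
      · rw [map_sub, map_zsmul, hπv, smul_zero, sub_zero]
      · rw [inner_sub_right, ← Int.cast_smul_eq_zsmul ℝ, inner_smul_right,
          real_inner_self_eq_norm_sq]
        have h1 := abs_sub_round (⟪v, u⟫ / ‖v‖ ^ 2)
        have h2 : ⟪v, u⟫ - (round (⟪v, u⟫ / ‖v‖ ^ 2) : ℝ) * ‖v‖ ^ 2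
            = (⟪v, u⟫ / ‖v‖ ^ 2 - round (⟪v, u⟫ / ‖v‖ ^ 2)) * ‖v‖ ^ 2 := by
          field_simp
        rw [h2, abs_mul, abs_of_nonneg (sq_nonneg ‖v‖)]
        nlinarith [sq_nonneg ‖v‖]
    have hsmall : ∀ u, |⟪v, u⟫| ≤ ‖v‖ ^ 2 / 2 → ‖u‖ ^ 2 ≤ ‖v‖ ^ 2 / 4 + ‖π u‖ ^ 2 := by
      intro u hu
      rw [hnorm]
      have h1 : |⟪v, u⟫ / ‖v‖| ≤ ‖v‖ / 2 := by
        rw [abs_div, abs_of_pos hvpos, div_le_iff₀ hvpos]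
        linarith
      have h2 := sq_le_sq' (abs_le.1 h1).1 (abs_le.1 h1).2
      linarith
    let L' : AddSubgroup ((ℝ ∙ v)ᗮ : Submodule ℝ F) := L.map π.toAddMonoidHom
    have : Fact (Module.finrank ℝ F = d + 1) := ⟨hd⟩
    have hfr : Module.finrank ℝ ((ℝ ∙ v)ᗮ : Submodule ℝ F) = d :=
      Submodule.finrank_orthogonal_span_singleton hv0
    have hL' : Submodule.span ℝ (L' : Set ((ℝ ∙ v)ᗮ : Submodule ℝ F)) = ⊤ := by
      have h1 : (L' : Set ((ℝ ∙ v)ᗮ : Submodule ℝ F)) = π '' (L : Set F) := rfl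
      rw [h1, Submodule.span_image, hL, Submodule.map_top, LinearMap.range_eq_top]
      exact hsurj
    have hmin' : ∀ w ∈ L', w ≠ 0 → r / 2 ≤ ‖w‖ := by
      rintro w ⟨u, hu, rfl⟩ hw0
      obtain ⟨u', hu', hπ, hu'v, -⟩ := hround u hu
      change r / 2 ≤ ‖π u‖
      change π u ≠ 0 at hw0
      have h0 : u' ≠ 0 := by
        rintro rfl
        rw [map_zero] at hπ
        exact hw0 hπ.symm
      have h1 := hmle u' hu' h0
      have h2 := hsmall u' hu'v
      rw [hπ] at h2
      by_contra hc
      push Not at hc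
      have h3 := norm_nonneg (π u)
      nlinarith
    obtain ⟨c', e', hc'L, hc'span, hlow, hdiag, hup⟩ :=
      ih ((ℝ ∙ v)ᗮ : Submodule ℝ F) hfr L' hL' (r / 2) (by linarith) hmin'
    have hlift : ∀ j, ∃ u ∈ L, π u = c' j ∧ |⟪v, u⟫| ≤ ‖v‖ ^ 2 / 2 := by
      intro j
      obtain ⟨u, hu, huc⟩ := hc'L j
      obtain ⟨u', hu', hπ, hu'v, -⟩ := hround u hu
      exact ⟨u', hu', hπ.trans huc, hu'v⟩
    choose u huL huπ huv using hlift
    let f : Fin (d + 1) → F := Fin.cons (‖v‖⁻¹ • v) (fun i => (e' i : F))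
    have hf : Orthonormal ℝ f := by
      rw [orthonormal_iff_ite]
      intro i j
      refine Fin.cases ?_ (fun i => ?_) i <;> refine Fin.cases ?_ (fun j => ?_) j
      · change ⟪‖v‖⁻¹ • v, ‖v‖⁻¹ • v⟫ = _
        rw [inner_smul_left, inner_smul_right, real_inner_self_eq_norm_sq]
        simp only [conj_trivial, if_true]
        have h0 : ‖v‖ ≠ 0 := hvpos.ne'
        rw [pow_two]
        field_simp
      · simp [f, inner_smul_left, horth, (Fin.succ_ne_zero _).symm]
      · simp only [f, Fin.cons_zero, Fin.cons_succ, inner_smul_right, real_inner_comm, horth]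
        simp [Fin.succ_ne_zero]
      · simp only [f, Fin.cons_succ, Fin.succ_inj]
        exact orthonormal_iff_ite.1 e'.orthonormal i j
    obtain ⟨e, he⟩ := Orthonormal.exists_orthonormalBasis_extension_of_card_eq (𝕜 := ℝ)
      (by simp [hd]) (v := f) (s := Set.univ) (hf.comp _ Subtype.val_injective)
    have he0 : e 0 = ‖v‖⁻¹ • v := by rw [he 0 (Set.mem_univ _)]; rfl
    have hes : ∀ i : Fin d, e i.succ = (e' i : F) := fun i => by
      rw [he _ (Set.mem_univ _)]; rfl
    have hin00 : ⟪e 0, v⟫ = ‖v‖ := by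
      rw [he0, inner_smul_left, real_inner_self_eq_norm_sq]
      simp; field_simp
    have hin0 : ∀ j, |⟪e 0, u j⟫| ≤ ‖v‖ := by
      intro j
      rw [he0, inner_smul_left]
      simp only [conj_trivial, abs_mul, abs_inv, abs_norm]
      rw [inv_mul_le_iff₀ hvpos]
      have := huv j
      nlinarith
    have hins0 : ∀ i : Fin d, ⟪e i.succ, v⟫ = 0 := fun i => by
      rw [hes, real_inner_comm, horth]
    have hins : ∀ i j : Fin d, ⟪e i.succ, u j⟫ = ⟪e' i, c' j⟫ := by
      intro i j
      have h1 : u j = (⟪v, u j⟫ / ‖v‖ ^ 2) • v + (c' j : F) := by rw [← huπ, hdec]; abel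
      rw [h1, inner_add_right, inner_smul_right, hins0, mul_zero, zero_add, hes]
      rfl
    refine ⟨Fin.cons v u, e, ?_, ?_, ?_, ?_, ?_⟩
    · intro j
      refine Fin.cases ?_ (fun j => ?_) j
      · exact hvL
      · exact huL j
    · intro w hw
      obtain ⟨z, hz⟩ := hc'span (π w) ⟨w, hw, rfl⟩
      set x := w - ∑ j, z j • u j with hx
      have hxL : x ∈ L := L.sub_mem hw (L.sum_mem fun j _ => L.zsmul_mem (huL j) _)
      have hπx : π x = 0 := by
        rw [hx, map_sub, hz, map_sum]
        simp [huπ]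
      obtain ⟨x', hx'L, hπx', hx'v, k, hk⟩ := hround x hxL
      have hx'0 : x' = 0 := by
        by_contra h0
        have h1 := hmle x' hx'L h0
        have h2 := hsmall x' hx'v
        rw [hπx', hπx, norm_zero] at h2
        nlinarith
      refine ⟨Fin.cons k z, ?_⟩
      rw [Fin.sum_univ_succ]
      simp only [Fin.cons_zero, Fin.cons_succ]
      rw [hx'0, zero_add] at hk
      rw [← hk, hx]; abel
    · intro i j
      refine Fin.cases ?_ (fun i => ?_) i <;> refine Fin.cases ?_ (fun j => ?_) j
      · intro h; exact absurd h (lt_irrefl _)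
      · intro h; exact absurd h (Fin.not_lt_zero _)
      · intro _; exact hins0 i
      · intro h
        simp only [Fin.cons_succ]
        rw [hins]
        exact hlow i j (by simpa using h)
    · intro i
      refine Fin.cases ?_ (fun i => ?_) i
      · simp only [Fin.cons_zero]
        rw [hin00]
        have h1 : r / 2 ^ (d + 1) ≤ r := div_le_self hr.le (one_le_pow₀ (by norm_num))
        exact h1.trans (hmin v hvL hv0)
      · simp only [Fin.cons_succ]
        rw [hins]
        refine le_trans (le_of_eq ?_) (hdiag i)
        rw [pow_succ]; field_simp
    · intro i j
      refine Fin.cases ?_ (fun i => ?_) i <;> refine Fin.cases ?_ (fun j => ?_) j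
      · intro h; exact absurd h (lt_irrefl _)
      · intro _
        simp only [Fin.cons_succ, Fin.cons_zero]
        rw [hin00]; exact hin0 j
      · intro h; exact absurd h (Fin.not_lt_zero _)
      · intro h
        simp only [Fin.cons_succ]
        rw [hins, hins]
        exact hup i j (by simpa using h)

theorem br_mahler (n : ℕ) (r D : ℝ) (hr : 0 < r) :
    ∃ R δ : ℝ, 0 < δ ∧ ∀ T₀ : Euc n →ₗ[ℝ] Euc n, LinearMap.det T₀ ≠ 0 →
      (∀ v ∈ latticeSet T₀, v ≠ 0 → r ≤ ‖v‖) → |LinearMap.det T₀| ≤ D →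
      ∃ T : Euc n →L[ℝ] Euc n, latticeSet (T : Euc n →ₗ[ℝ] Euc n) = latticeSet T₀ ∧
        ‖T‖ ≤ R ∧ δ ≤ |LinearMap.det (T : Euc n →ₗ[ℝ] Euc n)| := by
  set q : ℝ := r / 2 ^ n with hq
  have hqpos : 0 < q := by positivity
  refine ⟨n * (n * (D / q ^ (n - 1))), q ^ n, by positivity, ?_⟩
  intro T₀ hdet hmin hD
  let L : AddSubgroup (Euc n) :=
    { carrier := latticeSet T₀
      zero_mem' := (mem_latticeSet _ _).2 ⟨0, by simp [zvec]⟩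
      add_mem' := by
        rintro a b ⟨z, rfl⟩ ⟨w, rfl⟩
        refine ⟨z + w, ?_⟩
        simp [add_smul, Finset.sum_add_distrib]
      neg_mem' := by
        rintro a ⟨z, rfl⟩
        refine ⟨-z, ?_⟩
        simp }
  have hL : Submodule.span ℝ (L : Set (Euc n)) = ⊤ := by
    have hsurj : LinearMap.range T₀ = ⊤ := by
      rw [LinearMap.range_eq_top]
      exact (LinearMap.equivOfDetNeZero T₀ hdet).surjective
    rw [eq_top_iff, ← hsurj]
    rintro _ ⟨y, rfl⟩
    have hy : y = ∑ i, y i • EuclideanSpace.single i (1 : ℝ) := by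
      ext j
      simp [Finset.sum_apply, Pi.single_apply]
    rw [hy, map_sum]
    refine Submodule.sum_mem _ fun i _ => ?_
    rw [map_smul]
    refine Submodule.smul_mem _ _ (Submodule.subset_span ?_)
    exact ⟨Pi.single i 1, by simp [Pi.single_apply]⟩
  obtain ⟨c, e, hcL, hcspan, hlow, hdiag, hup⟩ :=
    red_lemma n (Euc n) (by simp) L hL r hr hmin
  let T : Euc n →ₗ[ℝ] Euc n := (EuclideanSpace.basisFun (Fin n) ℝ).toBasis.constr ℝ c
  have hTs : ∀ j, T (EuclideanSpace.single j 1) = c j := by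
    intro j
    have := (EuclideanSpace.basisFun (Fin n) ℝ).toBasis.constr_basis ℝ c j
    simpa [T] using this
  have hTl : latticeSet T = latticeSet T₀ := by
    ext w
    constructor
    · rintro ⟨z, rfl⟩
      change _ ∈ L
      rw [map_sum]
      refine L.sum_mem fun i _ => ?_
      rw [map_smul, hTs, Int.cast_smul_eq_zsmul]
      exact L.zsmul_mem (hcL i) _
    · intro hw
      obtain ⟨z, hz⟩ := hcspan w hw
      refine ⟨z, ?_⟩
      rw [hz, map_sum]
      refine Finset.sum_congr rfl fun i _ => ?_
      rw [map_smul, hTs, Int.cast_smul_eq_zsmul]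
  have hdetT : |LinearMap.det T| = |LinearMap.det T₀| := lat_det_unique T₀ T hdet hTl.symm
  have hprod : |LinearMap.det T| = ∏ i, ⟪e i, c i⟫ := by
    have h1 := Module.Basis.det_comp e.toBasis T (EuclideanSpace.basisFun (Fin n) ℝ)
    have h2 := OrthonormalBasis.det_to_matrix_orthonormalBasis e (EuclideanSpace.basisFun (Fin n) ℝ)
    have h3 : (T ∘ (EuclideanSpace.basisFun (Fin n) ℝ)) = c := by
      funext j
      simp [hTs]
    rw [h3] at h1
    have h4 : |e.toBasis.det c| = |LinearMap.det T| := by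
      rw [h1, abs_mul]
      rw [Real.norm_eq_abs] at h2
      rw [h2, mul_one]
    rw [← h4, Module.Basis.det_apply, Matrix.det_of_upperTriangular]
    · have h5 : ∀ i, e.toBasis.toMatrix c i i = ⟪e i, c i⟫ := by
        intro i
        simp [Module.Basis.toMatrix_apply, OrthonormalBasis.repr_apply_apply]
      simp only [h5]
      exact abs_of_nonneg (Finset.prod_nonneg fun i _ => hqpos.le.trans (hdiag i))
    · intro i j hij
      simp only [id] at hij
      simp [Module.Basis.toMatrix_apply, OrthonormalBasis.repr_apply_apply, hlow i j hij]
  have hpos : ∀ i, 0 < ⟪e i, c i⟫ := fun i => hqpos.trans_le (hdiag i)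
  have hdb : ∀ i, ⟪e i, c i⟫ ≤ D / q ^ (n - 1) := by
    intro i
    rw [le_div_iff₀ (by positivity)]
    calc ⟪e i, c i⟫ * q ^ (n - 1)
        ≤ ⟪e i, c i⟫ * ∏ j ∈ Finset.univ.erase i, ⟪e j, c j⟫ := by
          refine mul_le_mul_of_nonneg_left ?_ (hpos i).le
          have h := Finset.prod_le_prod (s := Finset.univ.erase i) (f := fun _ => q)
            (g := fun j => ⟪e j, c j⟫) (fun _ _ => hqpos.le) (fun j _ => hdiag j)
          simpa [Finset.card_erase_of_mem] using h
      _ = ∏ j, ⟪e j, c j⟫ := Finset.mul_prod_erase Finset.univ (fun j => ⟪e j, c j⟫) (Finset.mem_univ i)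
      _ ≤ D := by rw [← hprod, hdetT]; exact hD
  have hcn : ∀ j, ‖c j‖ ≤ n * (D / q ^ (n - 1)) := by
    intro j
    calc ‖c j‖ = ‖∑ i, ⟪e i, c j⟫ • e i‖ := by rw [e.sum_repr' (c j)]
      _ ≤ ∑ i, ‖⟪e i, c j⟫ • e i‖ := norm_sum_le _ _
      _ ≤ ∑ i : Fin n, D / q ^ (n - 1) := by
          refine Finset.sum_le_sum fun i _ => ?_
          rw [norm_smul, e.norm_eq_one, mul_one, Real.norm_eq_abs]
          refine le_trans ?_ (hdb i)
          rcases lt_trichotomy i j with h | h | h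
          · exact hup i j h
          · subst h; exact (abs_of_pos (hpos i)).le
          · rw [hlow i j h, abs_zero]; exact (hpos i).le
      _ = _ := by simp
  refine ⟨LinearMap.toContinuousLinearMap T, by simpa using hTl, ?_, ?_⟩
  · rcases Nat.eq_zero_or_pos n with h0 | h0
    · subst h0
      refine ContinuousLinearMap.opNorm_le_bound _ (by simp) fun x => ?_
      have : x = 0 := Subsingleton.elim _ _
      simp [this]
    have hM : 0 ≤ D / q ^ (n - 1) := (hpos ⟨0, h0⟩).le.trans (hdb _)
    refine ContinuousLinearMap.opNorm_le_bound _ (by positivity) fun y => ?_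
    have hy : y = ∑ i, y i • EuclideanSpace.single i (1 : ℝ) := by
      ext j
      simp [Finset.sum_apply, Pi.single_apply]
    calc ‖T y‖ = ‖∑ i, y i • c i‖ := by
          conv_lhs => rw [hy, map_sum]
          simp only [map_smul, hTs]
      _ ≤ ∑ i, ‖y i • c i‖ := norm_sum_le _ _
      _ ≤ ∑ i : Fin n, ‖y‖ * (n * (D / q ^ (n - 1))) := by
          refine Finset.sum_le_sum fun i _ => ?_
          rw [norm_smul]
          exact mul_le_mul (PiLp.norm_apply_le y i) (hcn i) (norm_nonneg _) (norm_nonneg _)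
      _ = _ := by simp; ring
  · change q ^ n ≤ |LinearMap.det T|
    rw [hprod]
    have h := Finset.prod_le_prod (s := Finset.univ) (f := fun _ : Fin n => q)
      (g := fun j => ⟪e j, c j⟫) (fun _ _ => hqpos.le) (fun j _ => hdiag j)
    simpa using h

def capBody {n : ℕ} (u : Euc n) (ε : ℝ) : Set (Euc n) :=
  unitBall n ∩ {y | |⟪y, u⟫| ≤ 1 - ε}

lemma capBody_int {n : ℕ} (u : Euc n) (ε : ℝ) :
    {y : Euc n | ‖y‖ < 1 ∧ |⟪y, u⟫| < 1 - ε} ⊆ interior (capBody u ε) := by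
  refine interior_maximal ?_ ?_
  · rintro y ⟨h1, h2⟩
    exact ⟨by simpa [unitBall] using h1.le, h2.le⟩
  · have h1 : IsOpen {y : Euc n | ‖y‖ < 1} := isOpen_lt (by fun_prop) (by fun_prop)
    have h2 : IsOpen {y : Euc n | |⟪y, u⟫| < 1 - ε} := isOpen_lt (by fun_prop) (by fun_prop)
    exact h1.inter h2

lemma capBody_symCB {n : ℕ} (u : Euc n) (ε : ℝ) (h1 : ε < 1) : IsSymCB (capBody u ε) where
  convex := by
    refine (convex_closedBall _ _).inter ?_
    intro a ha b hb s t hs ht hst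
    simp only [Set.mem_setOf_eq, inner_add_left, inner_smul_left, conj_trivial] at *
    rw [abs_le] at *
    have h2 : t = 1 - s := by linarith
    subst h2
    constructor <;> nlinarith
  compact := by
    refine (isCompact_closedBall _ _).inter_right ?_
    exact isClosed_le (by fun_prop) (by fun_prop)
  nonempty_interior := ⟨0, capBody_int u ε (by simp; linarith)⟩
  symm := by
    ext y
    simp [capBody, unitBall]

lemma capBody_ne {n : ℕ} (u : Euc n) (hu : ‖u‖ = 1) (ε : ℝ) (h0 : 0 < ε) :
    capBody u ε ≠ unitBall n := by
  intro h
  have h1 : u ∈ unitBall n := by simp [unitBall, hu]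
  rw [← h] at h1
  have h2 := h1.2
  simp only [Set.mem_setOf_eq, real_inner_self_eq_norm_sq, hu] at h2
  norm_num at h2
  linarith

lemma capBody_adm {n : ℕ} (u : Euc n) (hu : ‖u‖ = 1) (ε : ℝ) (h0 : 0 < ε) (Λ : Set (Euc n))
    (h : IsAdmissible Λ (capBody u ε)) (v : Euc n) (hv : v ∈ Λ) (hv0 : v ≠ 0) :
    1 - ε ≤ ‖v‖ ∧ (‖v‖ < 1 → 1 - ε ≤ |⟪v, u⟫|) := by
  have key : ‖v‖ < 1 → 1 - ε ≤ |⟪v, u⟫| := by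
    intro h1
    by_contra hc
    push Not at hc
    exact hv0 (h ⟨hv, capBody_int u ε ⟨h1, hc⟩⟩)
  refine ⟨?_, key⟩
  by_contra hc
  push Not at hc
  have h1 := key (by linarith)
  have h2 := abs_real_inner_le_norm v u
  rw [hu, mul_one] at h2
  linarith

lemma two_bad {n : ℕ} (u a b : Euc n) (hu : ‖u‖ = 1) (ha : ‖a‖ < 1) (hb : ‖b‖ < 1)
    (ha' : 19 / 20 ≤ ⟪a, u⟫) (hb' : 19 / 20 ≤ ⟪b, u⟫) : ‖a - b‖ < 19 / 20 := by
  have h1 := parallelogram_law_with_norm ℝ a b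
  have h2 := real_inner_le_norm (a + b) u
  rw [inner_add_left, hu, mul_one] at h2
  have h3 := norm_nonneg a
  have h4 := norm_nonneg b
  by_contra hc
  push Not at hc
  nlinarith

lemma br_forward_main {n : ℕ} (hn : 2 ≤ n) (Λ : Set (Euc n))
    (hcrit : IsCriticalLattice Λ (unitBall n)) (hmin : minNorm Λ = 1)
    (K : Set (Euc n)) (hK : IsSymCB K) (hKB : K ⊆ unitBall n) (hne : K ≠ unitBall n)
    (hd : critDet K = critDet (unitBall n)) :
    IsExtremeCfg (minVecs Λ) ∧
        ∀ x ∈ minVecs Λ, IsExtremeCfg (minVecs Λ \ {x, -x}) := by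
  have hfin := minVecs_finite hcrit.1 hmin
  have hnegK : ∀ y, -y ∈ K → y ∈ K := by
    intro y hy
    rw [← hK.symm]
    exact hy
  have hz : ∃ z : Euc n, ‖z‖ = 1 ∧ z ∉ K := by
    by_contra hc
    push Not at hc
    apply hne
    refine Set.Subset.antisymm hKB ?_
    intro y hy
    have : Nontrivial (Euc n) := by
      have : Nonempty (Fin n) := ⟨⟨0, by omega⟩⟩
      infer_instance
    have h1 : unitBall n = convexHull ℝ (sphere (0 : Euc n) 1) := by
      rw [convexHull_sphere_eq_closedBall _ zero_le_one]; rfl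
    rw [h1] at hy
    refine convexHull_min ?_ hK.convex hy
    intro w hw
    exact hc w (by simpa using hw)
  obtain ⟨z, hz1, hzK⟩ := hz
  constructor
  · refine br_noDesc_extreme _ hfin (fun x hx => minVecs_neg hcrit.1 hx) ?_
    have := br_forward hn Λ hcrit hmin K hK.compact.isClosed hKB hd
      (LinearIsometryEquiv.refl ℝ _) Set.univ (fun v _ h => absurd (Set.mem_univ v) h)
    rwa [Set.univ_inter] at this
  · intro x hx
    refine br_noDesc_extreme _ (hfin.subset Set.diff_subset) ?_ ?_
    · rintro y ⟨hy, hyx⟩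
      refine ⟨minVecs_neg hcrit.1 hy, fun h => hyx ?_⟩
      rcases h with h | h
      · right; rw [← h]; simp
      · left; exact neg_inj.1 h
    · have hUx : (ℝ ∙ (x - z))ᗮ.reflection x = z :=
        Submodule.reflection_sub (by rw [minVecs_norm hmin hx, hz1])
      have := br_forward hn Λ hcrit hmin K hK.compact.isClosed hKB hd
        ((ℝ ∙ (x - z))ᗮ.reflection) {x, -x}ᶜ (by
          intro v hv h
          rw [Set.notMem_compl_iff] at h
          rcases h with h | h
          · rw [h, hUx]; exact hzK
          · rw [h, map_neg, hUx]
            exact fun h => hzK (hnegK _ h))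
      rwa [Set.inter_comm, ← Set.diff_eq] at this

/-- The final contradiction, for one lattice `T` close to the limit lattice `T'`. -/
lemma br_step {n : ℕ} (Λ : Set (Euc n)) (S : Set (Euc n)) (hSΛ : S ⊆ Λ) (hS0 : ∀ y ∈ S, y ≠ 0) (u : Euc n)
    (hu : ‖u‖ = 1) (T T' : Euc n →ₗ[ℝ] Euc n) (hT : LinearMap.det T ≠ 0)
    (U : Euc n ≃ₗᵢ[ℝ] Euc n) (hU : latticeSet T' = U '' Λ)
    (hadm : ∀ v ∈ latticeSet T, v ≠ 0 → 19 / 20 ≤ ‖v‖ ∧ (‖v‖ < 1 → 19 / 20 ≤ |⟪v, u⟫|))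
    (N : Euc n ≃ₗ[ℝ] Euc n) (hN : ∀ y, N (T' y) = y) :
    (∀ y ∈ S, 1 ≤ ‖T (N (U y))‖) ∨
      ∃ x ∈ S, ∀ y ∈ S \ {x, -x}, 1 ≤ ‖T (N (U y))‖ := by
  have hTi : Function.Injective T := LinearMap.ker_eq_bot.1 (lat_inj T hT)
  have hHi : ∀ y, T (N (U y)) = 0 → y = 0 := by
    intro y hy
    have h1 := hTi (hy.trans (map_zero T).symm)
    simpa using h1
  have hmem : ∀ y ∈ Λ, ∃ z, N (U y) = zvec z := by
    intro y hy
    have h1 : U y ∈ latticeSet T' := by rw [hU]; exact ⟨y, hy, rfl⟩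
    obtain ⟨z, hz⟩ := (mem_latticeSet _ _).1 h1
    exact ⟨z, by rw [hz, hN]⟩
  by_cases hall : ∀ y ∈ S, 1 ≤ ‖T (N (U y))‖
  · exact Or.inl hall
  right
  push Not at hall
  obtain ⟨x, hxS, hx⟩ := hall
  refine ⟨x, hxS, ?_⟩
  rintro y ⟨hyS, hyx⟩
  by_contra hy
  push Not at hy
  apply hyx
  obtain ⟨zx, hzx⟩ := hmem x (hSΛ hxS)
  obtain ⟨zy, hzy⟩ := hmem y (hSΛ hyS)
  have hsub : T (N (U (x - y))) ∈ latticeSet T := by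
    refine (mem_latticeSet _ _).2 ⟨zx - zy, ?_⟩
    rw [zvec_sub, map_sub, map_sub, hzx, hzy]
  have hadd : T (N (U (x + y))) ∈ latticeSet T := by
    refine (mem_latticeSet _ _).2 ⟨zx - -zy, ?_⟩
    rw [zvec_sub, zvec_neg, map_add, map_add, hzx, hzy, sub_neg_eq_add]
  have hsub' : ‖T (N (U x)) - T (N (U y))‖ < 19 / 20 → y = x := by
    intro h
    rw [← map_sub, ← map_sub, ← map_sub] at h
    by_contra hne
    have := (hadm _ hsub (fun h0 => hne (sub_eq_zero.1 (hHi _ h0)).symm)).1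
    linarith
  have hadd' : ‖T (N (U x)) + T (N (U y))‖ < 19 / 20 → y = -x := by
    intro h
    rw [← map_add, ← map_add, ← map_add] at h
    by_contra hne
    have := (hadm _ hadd (fun h0 => hne (eq_neg_of_add_eq_zero_right (hHi _ h0)))).1
    linarith
  obtain ⟨-, hx2⟩ := hadm (T (N (U x))) ((mem_latticeSet _ _).2 ⟨zx, by rw [hzx]⟩)
    (fun h0 => hS0 x hxS (hHi _ h0))
  obtain ⟨-, hy2⟩ := hadm (T (N (U y))) ((mem_latticeSet _ _).2 ⟨zy, by rw [hzy]⟩)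
    (fun h0 => hS0 y hyS (hHi _ h0))
  specialize hx2 hx
  specialize hy2 hy
  generalize T (N (U x)) = a at *
  generalize T (N (U y)) = b at *
  rcases le_abs.1 hx2 with h1 | h1 <;> rcases le_abs.1 hy2 with h2 | h2
  · left; exact hsub' (two_bad u a b hu hx hy h1 h2)
  · right
    apply hadd'
    have := two_bad u a (-b) hu hx (by simpa using hy) h1 (by simpa using h2)
    rwa [sub_neg_eq_add] at this
  · right
    apply hadd'
    have := two_bad u b (-a) hu hy (by simpa using hx) h2 (by simpa using h1)
    rwa [sub_neg_eq_add, add_comm] at this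
  · left
    apply hsub'
    have := two_bad u (-a) (-b) hu (by simpa using hx) (by simpa using hy)
      (by simpa using h1) (by simpa using h2)
    rwa [← neg_add', norm_neg, ← sub_eq_add_neg] at this

lemma br_backward_main {n : ℕ} (hn : 2 ≤ n) (Λ : Set (Euc n))
    (hcrit : IsCriticalLattice Λ (unitBall n))
    (huniq : ∀ Λ' : Set (Euc n), IsCriticalLattice Λ' (unitBall n) →
      ∃ U : Euc n ≃ₗᵢ[ℝ] Euc n, Λ' = ⇑U '' Λ)
    (hmin : minNorm Λ = 1) (hext : IsExtremeCfg (minVecs Λ))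
    (hred : ∀ x ∈ minVecs Λ, IsExtremeCfg (minVecs Λ \ {x, -x})) :
    ∃ K : Set (Euc n), IsSymCB K ∧ K ⊆ unitBall n ∧ K ≠ unitBall n ∧
        critDet K = critDet (unitBall n) := by
  have hfin := minVecs_finite hcrit.1 hmin
  obtain ⟨⟨T₀, hT₀, hΛ⟩, hadm₀, hdet₀⟩ := id hcrit
  rw [hΛ] at hadm₀ hdet₀
  rw [latDet_eq T₀ hT₀] at hdet₀
  let u : Euc n := EuclideanSpace.single ⟨0, by omega⟩ 1
  have hu : ‖u‖ = 1 := by simp [u]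
  let ε : ℕ → ℝ := fun k => 1 / ((k : ℝ) + 20)
  have hε0 : ∀ k, 0 < ε k := fun k => by positivity
  have hε1 : ∀ k, ε k ≤ 1 / 20 := fun k =>
    one_div_le_one_div_of_le (by norm_num) (by have : (0 : ℝ) ≤ k := k.cast_nonneg; linarith)
  have hεlim : Filter.Tendsto ε Filter.atTop (nhds 0) := by
    have h1 : Filter.Tendsto (fun k : ℕ => (k : ℝ) + 20) Filter.atTop Filter.atTop :=
      Filter.tendsto_atTop_add_const_right _ _ tendsto_natCast_atTop_atTop
    have h2 := h1.inv_tendsto_atTop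
    refine h2.congr fun k => ?_
    simp [ε]
  by_contra hno
  have hlt : ∀ k, critDet (capBody u (ε k)) < critDet (unitBall n) := by
    intro k
    refine lt_of_le_of_ne ?_ fun h => hno ⟨capBody u (ε k),
      capBody_symCB u _ (by linarith [hε1 k]), Set.inter_subset_left,
      capBody_ne u hu _ (hε0 k), h⟩
    rw [← hdet₀]
    exact critDet_le _ T₀ hT₀ (adm_mono Set.inter_subset_left hadm₀)
  obtain ⟨R, δ, hδ, hmahler⟩ := br_mahler n (1 / 2) (critDet (unitBall n)) (by norm_num)
  have hex : ∀ k, ∃ T : Euc n →L[ℝ] Euc n,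
      (∀ v ∈ latticeSet (T : Euc n →ₗ[ℝ] Euc n), v ≠ 0 →
        1 - ε k ≤ ‖v‖ ∧ (‖v‖ < 1 → 1 - ε k ≤ |⟪v, u⟫|)) ∧ ‖T‖ ≤ R ∧
      δ ≤ |LinearMap.det (T : Euc n →ₗ[ℝ] Euc n)| ∧
      |LinearMap.det (T : Euc n →ₗ[ℝ] Euc n)| < critDet (unitBall n) := by
    intro k
    obtain ⟨T₁, hT₁, hadm₁, hlt₁⟩ := exists_of_critDet_lt _ T₀ hT₀
      (adm_mono Set.inter_subset_left hadm₀) _ (hlt k)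
    have h1 := capBody_adm u hu (ε k) (hε0 k) _ hadm₁
    obtain ⟨T, hTl, hTR, hTδ⟩ := hmahler T₁ hT₁
      (fun v hv h0 => by linarith [(h1 v hv h0).1, hε1 k]) hlt₁.le
    refine ⟨T, by rw [hTl]; exact h1, hTR, hTδ, ?_⟩
    rwa [lat_det_unique T₁ _ hT₁ hTl.symm]
  choose T hTadm hTR hTδ hTlt using hex
  obtain ⟨T', -, φ, hφ, hlim⟩ := (isCompact_closedBall (0 : Euc n →L[ℝ] Euc n) R).tendsto_subseq
    (x := T) (fun k => by simpa using hTR k)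
  have hdetlim : Filter.Tendsto (fun k => |LinearMap.det (T (φ k) : Euc n →ₗ[ℝ] Euc n)|)
      Filter.atTop (nhds |LinearMap.det (T' : Euc n →ₗ[ℝ] Euc n)|) :=
    ((ContinuousLinearMap.continuous_det.tendsto T').comp hlim).abs
  have hδ' : δ ≤ |LinearMap.det (T' : Euc n →ₗ[ℝ] Euc n)| :=
    ge_of_tendsto' hdetlim fun k => hTδ _
  have hle' : |LinearMap.det (T' : Euc n →ₗ[ℝ] Euc n)| ≤ critDet (unitBall n) :=
    le_of_tendsto' hdetlim fun k => (hTlt _).le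
  have hdetne : ∀ k, LinearMap.det (T k : Euc n →ₗ[ℝ] Euc n) ≠ 0 := fun k h => by
    have := hTδ k
    rw [h, abs_zero] at this
    linarith
  have hdetne' : LinearMap.det (T' : Euc n →ₗ[ℝ] Euc n) ≠ 0 := fun h => by
    rw [h, abs_zero] at hδ'
    linarith
  have hadm' : IsAdmissible (latticeSet (T' : Euc n →ₗ[ℝ] Euc n)) (unitBall n) := by
    rw [adm_ball hn]
    intro v hv hv0
    obtain ⟨z, rfl⟩ := (mem_latticeSet _ _).1 hv
    have hz : zvec z ≠ 0 := fun h => hv0 (by rw [h, map_zero])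
    have h1 : Filter.Tendsto (fun k => ‖T (φ k) (zvec z)‖) Filter.atTop
        (nhds ‖T' (zvec z)‖) :=
      (((ContinuousLinearMap.apply ℝ (Euc n) (zvec z)).continuous.tendsto T').comp hlim).norm
    have h2 : Filter.Tendsto (fun k => 1 - ε (φ k)) Filter.atTop (nhds (1 - 0)) :=
      tendsto_const_nhds.sub (hεlim.comp hφ.tendsto_atTop)
    rw [sub_zero] at h2
    refine le_of_tendsto_of_tendsto' h2 h1 fun k => ?_
    refine (hTadm (φ k) _ ((mem_latticeSet _ _).2 ⟨z, rfl⟩) ?_).1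
    intro h0
    apply hz
    exact LinearMap.ker_eq_bot.1 (lat_inj _ (hdetne (φ k))) (h0.trans (map_zero _).symm)
  have hdet' : |LinearMap.det (T' : Euc n →ₗ[ℝ] Euc n)| = critDet (unitBall n) :=
    le_antisymm hle' (critDet_le _ _ hdetne' hadm')
  obtain ⟨U, hU⟩ := huniq (latticeSet (T' : Euc n →ₗ[ℝ] Euc n))
    ⟨⟨_, hdetne', rfl⟩, hadm', by rw [latDet_eq _ hdetne', hdet']⟩
  let N : Euc n ≃ₗ[ℝ] Euc n := (LinearMap.equivOfDetNeZero (T' : Euc n →ₗ[ℝ] Euc n) hdetne').symm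
  have hN : ∀ y, N (T' y) = y := fun y =>
    (LinearMap.equivOfDetNeZero (T' : Euc n →ₗ[ℝ] Euc n) hdetne').symm_apply_apply y
  have hN' : ∀ y, T' (N y) = y := fun y =>
    (LinearMap.equivOfDetNeZero (T' : Euc n →ₗ[ℝ] Euc n) hdetne').apply_symm_apply y
  let Uc : Euc n →L[ℝ] Euc n := LinearMap.toContinuousLinearMap (U.toLinearEquiv : Euc n →ₗ[ℝ] Euc n)
  let Uc' : Euc n →L[ℝ] Euc n :=
    LinearMap.toContinuousLinearMap (U.symm.toLinearEquiv : Euc n →ₗ[ℝ] Euc n)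
  let Nc : Euc n →L[ℝ] Euc n := LinearMap.toContinuousLinearMap (N : Euc n →ₗ[ℝ] Euc n)
  let Φ : (Euc n →L[ℝ] Euc n) → (Euc n →L[ℝ] Euc n) := fun M => (Uc'.comp M).comp (Nc.comp Uc)
  have hΦc : Continuous Φ := (continuous_const.clm_comp continuous_id).clm_comp continuous_const
  have hΦapp : ∀ M y, Φ M y = U.symm (M (N (U y))) := fun M y => rfl
  have hΦ1 : Φ T' = 1 := by
    ext1 y
    rw [hΦapp, hN']
    simp
  have hΦlim : Filter.Tendsto (fun k => Φ (T (φ k))) Filter.atTop (nhds 1) := by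
    rw [← hΦ1]
    exact (hΦc.tendsto T').comp hlim
  have hΦdet : ∀ M : Euc n →L[ℝ] Euc n, |LinearMap.det (Φ M : Euc n →ₗ[ℝ] Euc n)| =
      |LinearMap.det (M : Euc n →ₗ[ℝ] Euc n)| * |LinearMap.det (N : Euc n →ₗ[ℝ] Euc n)| := by
    intro M
    have h1 : (Φ M : Euc n →ₗ[ℝ] Euc n) = (U.symm.toLinearEquiv : Euc n →ₗ[ℝ] Euc n) ∘ₗ
      (M : Euc n →ₗ[ℝ] Euc n) ∘ₗ (N : Euc n →ₗ[ℝ] Euc n) ∘ₗ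
        (U.toLinearEquiv : Euc n →ₗ[ℝ] Euc n) := rfl
    rw [h1, LinearMap.det_comp, LinearMap.det_comp, LinearMap.det_comp, abs_mul, abs_mul, abs_mul,
      isom_det, isom_det]
    ring
  have hNdet : |LinearMap.det (T' : Euc n →ₗ[ℝ] Euc n)| *
      |LinearMap.det (N : Euc n →ₗ[ℝ] Euc n)| = 1 := by
    rw [← hΦdet, hΦ1]
    have : ((1 : Euc n →L[ℝ] Euc n) : Euc n →ₗ[ℝ] Euc n) = LinearMap.id := rfl
    rw [this, LinearMap.det_id, abs_one]
  have hS1 : ∀ y ∈ minVecs Λ, ‖y‖ = 1 := fun y hy => minVecs_norm hmin hy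
  have e1 := hΦlim.eventually (br_local _ (br_extreme_noDesc _ hext) hS1)
  have e2 : ∀ᶠ k in Filter.atTop, ∀ x ∈ minVecs Λ,
      (∀ y ∈ minVecs Λ \ {x, -x}, 1 ≤ ‖Φ (T (φ k)) y‖) →
        1 ≤ |LinearMap.det (Φ (T (φ k)) : Euc n →ₗ[ℝ] Euc n)| := by
    rw [Filter.eventually_all_finite hfin]
    intro x hx
    exact hΦlim.eventually (br_local _ (br_extreme_noDesc _ (hred x hx)) fun y hy => hS1 y hy.1)
  obtain ⟨k, hk1, hk2⟩ := (e1.and e2).exists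
  have hnormΦ : ∀ y, ‖Φ (T (φ k)) y‖ = ‖T (φ k) (N (U y))‖ := fun y => by
    rw [hΦapp, LinearIsometryEquiv.norm_map]
  have hge : 1 ≤ |LinearMap.det (Φ (T (φ k)) : Euc n →ₗ[ℝ] Euc n)| := by
    rcases br_step Λ (minVecs Λ) (fun y hy => hy.1) (fun y hy => hy.2.1) u hu
      (T (φ k) : Euc n →ₗ[ℝ] Euc n) (T' : Euc n →ₗ[ℝ] Euc n) (hdetne _) U hU
      (fun v hv h0 => by
        obtain ⟨h1, h2⟩ := hTadm (φ k) v hv h0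
        have h3 := hε1 (φ k)
        exact ⟨by linarith, fun h => by linarith [h2 h]⟩) N hN with h | ⟨x, hx, h⟩
    · exact hk1 fun y hy => by rw [hnormΦ]; exact h y hy
    · exact hk2 x hx fun y hy => by rw [hnormΦ]; exact h y hy
  rw [hΦdet, ← hNdet, hdet'] at hge
  have hNpos : 0 < |LinearMap.det (N : Euc n →ₗ[ℝ] Euc n)| :=
    abs_pos.2 (LinearEquiv.isUnit_det' N).ne_zero
  have := le_of_mul_le_mul_right hge hNpos
  linarith [hTlt (φ k)]

/-- Theorem 3.5: if the critical lattice `Λ` of `Bⁿ` is unique up to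
rotation, then `Bⁿ` is reducible iff `S(Λ)` is redundantly extreme. -/
theorem ball_reducible_iff_redundantly_extreme (n : ℕ) (hn : 2 ≤ n) (Λ : Set (Euc n))
    (hcrit : IsCriticalLattice Λ (unitBall n))
    (huniq : ∀ Λ' : Set (Euc n), IsCriticalLattice Λ' (unitBall n) →
      ∃ U : Euc n ≃ₗᵢ[ℝ] Euc n, Λ' = ⇑U '' Λ)
    (hmin : minNorm Λ = 1) :
    (∃ K : Set (Euc n), IsSymCB K ∧ K ⊆ unitBall n ∧ K ≠ unitBall n ∧
        critDet K = critDet (unitBall n)) ↔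
      (IsExtremeCfg (minVecs Λ) ∧
        ∀ x ∈ minVecs Λ, IsExtremeCfg (minVecs Λ \ {x, -x})) := by
  constructor
  · rintro ⟨K, hK, hKB, hne, hd⟩
    exact br_forward_main hn Λ hcrit hmin K hK hKB hne hd
  · rintro ⟨h1, h2⟩
    exact br_backward_main hn Λ hcrit huniq hmin h1 h2

end
end

section
/- For n ≥ 4, let S = {(σ e_i + τ e_j)/√2 : 1 ≤ i < j ≤ n, σ, τ ∈ {+1, −1}} ⊂ ℝ^n be the 2n(n−1) minimal vectors of the root lattice D_n. Then: (a) for every x₀ ∈ S there exist nonnegative coefficients υ_x ≥ 0 (x ∈ S) with υ_x = υ_{−x}, υ_{x₀} = υ_{−x₀} = 0, and Id = Σ_{x∈S} υ_x P_x (so S is redundantly semi-eutactic); but (b) for x₀ = (e_1 + e_2)/√2 there is no family of strictly positive coefficients υ_x > 0 (x ∈ S ∖ {x₀, −x₀}) with υ_x = υ_{−x} and Id = Σ_{x∈S∖{x₀,−x₀}} υ_x P_x (so S is not redundantly extreme). -/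
open scoped RealInnerProductSpace
open Metric MeasureTheory

noncomputable section

/-- The minimal vectors of the root lattice `Dₙ`:
`S = {(σeᵢ + τeⱼ)/√2 : i ≠ j, σ, τ ∈ {±1}} ⊂ ℝⁿ`. -/
def rootCfgD (n : ℕ) : Set (Euc n) :=
  {v | ∃ i j : Fin n, i ≠ j ∧ ∃ σ τ : ℝ, (σ = 1 ∨ σ = -1) ∧ (τ = 1 ∨ τ = -1) ∧
    v = (Real.sqrt 2)⁻¹ •
      (σ • EuclideanSpace.single i 1 + τ • EuclideanSpace.single j 1)}


/-- The vector `(σ e_k + τ e_l)/√2`. -/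
def rv {n : ℕ} (k l : Fin n) (σ τ : ℝ) : Euc n :=
  (Real.sqrt 2)⁻¹ • (σ • EuclideanSpace.single k 1 + τ • EuclideanSpace.single l 1)

lemma rv_neg {n : ℕ} (k l : Fin n) (σ τ : ℝ) : -rv k l σ τ = rv k l (-σ) (-τ) := by
  unfold rv
  rw [← smul_neg]; congr 1; module

lemma rv_apply {n : ℕ} (k l : Fin n) (σ τ : ℝ) (m : Fin n) :
    rv k l σ τ m = (Real.sqrt 2)⁻¹ * (σ * (if m = k then 1 else 0) + τ * (if m = l then 1 else 0)) := by
  simp [rv, mul_add]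

lemma inv_sqrt_two_mul : (Real.sqrt 2)⁻¹ * (Real.sqrt 2)⁻¹ = (1 / 2 : ℝ) := by
  rw [← mul_inv, Real.mul_self_sqrt (by norm_num)]; norm_num

lemma projMap_rv {n : ℕ} (k l : Fin n) (σ τ : ℝ) (y : Euc n) (m : Fin n) :
    projMap (rv k l σ τ) y m = (1 / 2) * (σ * y k + τ * y l) *
      (σ * (if m = k then 1 else 0) + τ * (if m = l then 1 else 0)) := by
  have h : ⟪y, rv k l σ τ⟫ = (Real.sqrt 2)⁻¹ * (σ * y k + τ * y l) := by
    simp [rv, inner_smul_right, inner_add_right, EuclideanSpace.inner_single_right]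
    ring
  have h2 : projMap (rv k l σ τ) y m = ⟪y, rv k l σ τ⟫ * rv k l σ τ m := by
    simp [projMap]
  rw [h2, h, rv_apply, ← inv_sqrt_two_mul]
  ring

/-- The weight function, as a finitely supported function. -/
def wt {n : ℕ} (c : Fin n → Fin n → ℝ) : Euc n →₀ ℝ :=
  ∑ k, ∑ l, (Finsupp.single (rv k l 1 1) (c k l) + Finsupp.single (rv k l 1 (-1)) (c k l) +
    Finsupp.single (rv k l (-1) 1) (c k l) + Finsupp.single (rv k l (-1) (-1)) (c k l))

open Classical in
lemma wt_apply {n : ℕ} (c : Fin n → Fin n → ℝ) (x : Euc n) :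
    wt c x = ∑ k, ∑ l, ((if rv k l 1 1 = x then c k l else 0) +
      (if rv k l 1 (-1) = x then c k l else 0) +
      (if rv k l (-1) 1 = x then c k l else 0) + (if rv k l (-1) (-1) = x then c k l else 0)) := by
  simp [wt, Finsupp.finsetSum_apply, Finsupp.single_apply]

lemma wt_nonneg {n : ℕ} (c : Fin n → Fin n → ℝ) (hc : ∀ k l, 0 ≤ c k l) (x : Euc n) :
    0 ≤ wt c x := by
  classical
  rw [wt_apply]
  refine Finset.sum_nonneg fun k _ => Finset.sum_nonneg fun l _ => ?_
  have := hc k l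
  split_ifs <;> positivity

lemma wt_zero {n : ℕ} (c : Fin n → Fin n → ℝ) (x : Euc n)
    (h : ∀ k l σ τ, (σ = 1 ∨ σ = -1) → (τ = 1 ∨ τ = -1) → rv k l σ τ = x → c k l = 0) :
    wt c x = 0 := by
  classical
  rw [wt_apply]
  refine Finset.sum_eq_zero fun k _ => Finset.sum_eq_zero fun l _ => ?_
  have h1 := h k l 1 1 (by simp) (by simp)
  have h2 := h k l 1 (-1) (by simp) (by simp)
  have h3 := h k l (-1) 1 (by simp) (by simp)
  have h4 := h k l (-1) (-1) (by simp) (by simp)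
  simp +contextual [h1, h2, h3, h4]

lemma wt_neg {n : ℕ} (c : Fin n → Fin n → ℝ) (x : Euc n) : wt c x = wt c (-x) := by
  classical
  rw [wt_apply, wt_apply]
  refine Finset.sum_congr rfl fun k _ => Finset.sum_congr rfl fun l _ => ?_
  simp only [eq_neg_iff_add_eq_zero, ← neg_eq_iff_add_eq_zero, rv_neg, neg_neg]
  ring

lemma wt_sum {n : ℕ} (c : Fin n → Fin n → ℝ) (hs : ∀ k l, c k l = c l k)
    (hr : ∀ k, ∑ l, c k l = 1 / 4) :
    ∑ᶠ x, wt c x • projMap x = (LinearMap.id : Euc n →ₗ[ℝ] Euc n) := by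
  have h1 : ∑ᶠ x, wt c x • projMap x = Finsupp.linearCombination ℝ projMap (wt c) := by
    rw [Finsupp.linearCombination_apply, Finsupp.sum]
    apply finsum_eq_sum_of_support_subset
    intro x hx
    simp only [Function.mem_support] at hx
    simp only [Finset.mem_coe, Finsupp.mem_support_iff]
    intro h; simp [h] at hx
  rw [h1]
  ext y m
  simp only [wt, map_sum, map_add, Finsupp.linearCombination_single, LinearMap.sum_apply,
    LinearMap.add_apply, LinearMap.smul_apply, WithLp.ofLp_sum, Finset.sum_apply, WithLp.ofLp_add,
    Pi.add_apply, WithLp.ofLp_smul, Pi.smul_apply, smul_eq_mul, projMap_rv, LinearMap.id_apply]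
  have h2 : ∀ k l : Fin n, (c k l * ((1 / 2) * (1 * y k + 1 * y l) *
      (1 * (if m = k then 1 else 0) + 1 * (if m = l then 1 else 0))) +
      c k l * ((1 / 2) * (1 * y k + (-1) * y l) *
      (1 * (if m = k then 1 else 0) + (-1) * (if m = l then 1 else 0))) +
      c k l * ((1 / 2) * ((-1) * y k + 1 * y l) *
      ((-1) * (if m = k then 1 else 0) + 1 * (if m = l then 1 else 0))) +
      c k l * ((1 / 2) * ((-1) * y k + (-1) * y l) *
      ((-1) * (if m = k then 1 else 0) + (-1) * (if m = l then 1 else 0)))) =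
      (if m = k then 2 * y k * c k l else 0) + (if m = l then 2 * y l * c k l else 0) := by
    intro k l
    split_ifs <;> ring
  simp only [h2, Finset.sum_add_distrib]
  have h3 : ∑ k, ∑ l, (if m = k then 2 * y k * c k l else 0) = 2 * y m * (1 / 4) := by
    rw [Finset.sum_comm]
    simp [← Finset.mul_sum, hr m]
  have h4 : ∑ k, ∑ l, (if m = l then 2 * y l * c k l else 0) = 2 * y m * (1 / 4) := by
    simp only [hs _ m, Finset.sum_ite_eq, Finset.mem_univ, if_true, ← Finset.mul_sum, hr m]
  rw [h3, h4]; ring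

/-- Edge weights vanishing at the edge `ij`. -/
def ew {n : ℕ} (i j k l : Fin n) : ℝ :=
  if k = l then 0 else
  if k = i ∨ k = j then (if l = i ∨ l = j then 0 else 1 / (4 * ((n : ℝ) - 2)))
  else (if l = i ∨ l = j then 1 / (4 * ((n : ℝ) - 2))
    else ((n : ℝ) - 4) / (4 * ((n : ℝ) - 2) * ((n : ℝ) - 3)))

lemma ew_nonneg {n : ℕ} (hn : 4 ≤ n) (i j k l : Fin n) : 0 ≤ ew i j k l := by
  have : (4 : ℝ) ≤ n := by exact_mod_cast hn
  have h2 : (0 : ℝ) < n - 2 := by linarith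
  have h3 : (0 : ℝ) < n - 3 := by linarith
  have h4 : (0 : ℝ) ≤ n - 4 := by linarith
  unfold ew
  split_ifs <;> positivity

lemma ew_symm {n : ℕ} (i j k l : Fin n) : ew i j k l = ew i j l k := by
  unfold ew
  simp only [eq_comm (a := k) (b := l)]
  split_ifs <;> rfl

lemma ew_row {n : ℕ} (hn : 4 ≤ n) (i j : Fin n) (hij : i ≠ j) (k : Fin n) :
    ∑ l, ew i j k l = 1 / 4 := by
  have : (4 : ℝ) ≤ n := by exact_mod_cast hn
  have h2 : (n : ℝ) - 2 ≠ 0 := by linarith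
  have h3 : (n : ℝ) - 3 ≠ 0 := by linarith
  by_cases hk : k = i ∨ k = j
  · have : ∀ l, ew i j k l = 1 / (4 * ((n : ℝ) - 2)) *
        (1 - (if l = i then 1 else 0) - (if l = j then 1 else 0)) := by
      intro l
      unfold ew
      rcases hk with rfl | rfl <;> grind
    simp only [this, ← Finset.mul_sum, Finset.sum_sub_distrib, Finset.sum_ite_eq', Finset.mem_univ,
      if_true, Finset.sum_const, Finset.card_univ, Fintype.card_fin, nsmul_eq_mul]
    field_simp
    ring
  · have : ∀ l, ew i j k l = 1 / (4 * ((n : ℝ) - 2)) *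
        ((if l = i then 1 else 0) + (if l = j then 1 else 0)) +
        ((n : ℝ) - 4) / (4 * ((n : ℝ) - 2) * ((n : ℝ) - 3)) *
        (1 - (if l = i then 1 else 0) - (if l = j then 1 else 0) - (if l = k then 1 else 0)) := by
      intro l
      unfold ew
      push Not at hk
      by_cases h1 : l = i
      · subst h1; simp [hk.1, hk.2, hij, Ne.symm hk.1]
      by_cases h2 : l = j
      · subst h2; simp [hk.1, hk.2, h1, Ne.symm hk.2]
      by_cases h3 : l = k
      · subst h3; simp [h1, h2]
      · simp [h1, h2, h3, hk, Ne.symm h3]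
    simp only [this, ← Finset.mul_sum, Finset.sum_sub_distrib, Finset.sum_add_distrib,
      Finset.sum_ite_eq', Finset.mem_univ,
      if_true, Finset.sum_const, Finset.card_univ, Fintype.card_fin, nsmul_eq_mul]
    field_simp
    ring

lemma rv_eq_support {n : ℕ} {i j k l : Fin n} {σ τ σ' τ' : ℝ} (hσ : σ ≠ 0) (hτ : τ ≠ 0)
    (hkl : k ≠ l) (h : rv k l σ τ = rv i j σ' τ') : (k = i ∨ k = j) ∧ (l = i ∨ l = j) := by
  have hs : (Real.sqrt 2)⁻¹ ≠ 0 := by positivity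
  constructor
  · by_contra hc
    push Not at hc
    have := congrArg (fun v : Euc n => v k) h
    simp only [rv_apply] at this
    simp [hc.1, hc.2, hkl, hσ] at this
  · by_contra hc
    push Not at hc
    have := congrArg (fun v : Euc n => v l) h
    simp only [rv_apply] at this
    simp [hc.1, hc.2, hkl.symm, hτ] at this

lemma pm_ne {σ : ℝ} (h : σ = 1 ∨ σ = -1) : σ ≠ 0 := by
  rcases h with rfl | rfl <;> norm_num

/-- Lemma 3.1, `Dₙ` case: for `n ≥ 4`, the configuration of minimal
vectors of `Dₙ` is redundantly semi-eutactic (a) but not redundantly extreme, as witnessed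
by `x₀ = (e₁ + e₂)/√2` (b). -/
theorem rootCfgD_red_semiEutactic_not_red_extreme (n : ℕ) (hn : 4 ≤ n) :
    (∀ x₀ ∈ rootCfgD n, ∃ υ : Euc n → ℝ,
      (∀ x ∈ rootCfgD n, 0 ≤ υ x) ∧ (∀ x ∉ rootCfgD n, υ x = 0) ∧
      (Function.support υ).Finite ∧ (∀ x, υ x = υ (-x)) ∧
      υ x₀ = 0 ∧ υ (-x₀) = 0 ∧
      ∑ᶠ x, υ x • projMap x = (LinearMap.id : Euc n →ₗ[ℝ] Euc n)) ∧
    ¬ IsEutacticCfg (rootCfgD n \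
      {(Real.sqrt 2)⁻¹ • (EuclideanSpace.single (⟨0, by omega⟩ : Fin n) (1 : ℝ) +
          EuclideanSpace.single (⟨1, by omega⟩ : Fin n) (1 : ℝ)),
        -((Real.sqrt 2)⁻¹ • (EuclideanSpace.single (⟨0, by omega⟩ : Fin n) (1 : ℝ) +
          EuclideanSpace.single (⟨1, by omega⟩ : Fin n) (1 : ℝ)))}) := by
  constructor
  · rintro x₀ ⟨i, j, hij, σ, τ, hσ, hτ, hx⟩
    have hx' : x₀ = rv i j σ τ := hx
    have hz : wt (ew i j) x₀ = 0 := by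
      apply wt_zero
      intro k l σ' τ' h1 h2 h
      by_cases hkl : k = l
      · simp [ew, hkl]
      · rw [hx'] at h
        obtain ⟨a, b⟩ := rv_eq_support (pm_ne h1) (pm_ne h2) hkl h
        simp [ew, a, b]
    refine ⟨wt (ew i j), fun x _ => wt_nonneg _ (ew_nonneg hn i j) x, ?_, ?_, wt_neg _, hz, ?_,
      wt_sum _ (ew_symm i j) (ew_row hn i j hij)⟩
    · intro x hxS
      apply wt_zero
      intro k l σ' τ' h1 h2 h
      by_cases hkl : k = l
      · simp [ew, hkl]
      · exact absurd ⟨k, l, hkl, σ', τ', h1, h2, h.symm⟩ hxS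
    · exact Finsupp.hasFiniteSupport _
    · rw [← wt_neg]; exact hz
  · rintro ⟨υ, hpos, hzero, hfin, -, hsum⟩
    set p : Fin n := ⟨0, by omega⟩ with hp
    set q : Fin n := ⟨1, by omega⟩ with hq
    have hpq : p ≠ q := by simp [hp, hq]
    set S := rootCfgD n \ {(Real.sqrt 2)⁻¹ • (EuclideanSpace.single p (1 : ℝ) +
          EuclideanSpace.single q (1 : ℝ)),
        -((Real.sqrt 2)⁻¹ • (EuclideanSpace.single p (1 : ℝ) +
          EuclideanSpace.single q (1 : ℝ)))} with hS
    have hbase : (Real.sqrt 2)⁻¹ • (EuclideanSpace.single p (1 : ℝ) +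
          EuclideanSpace.single q (1 : ℝ)) = rv p q 1 1 := by simp [rv]
    have hsq : (0 : ℝ) < (Real.sqrt 2)⁻¹ := by positivity
    have hfs : ∑ᶠ x, υ x • projMap x = ∑ x ∈ hfin.toFinset, υ x • projMap x := by
      apply finsum_eq_sum_of_support_subset
      intro x hx
      simp only [Function.mem_support] at hx
      simp only [Set.Finite.coe_toFinset, Function.mem_support]
      intro h; simp [h] at hx
    rw [hfs] at hsum
    have hent : ∑ x ∈ hfin.toFinset, υ x * (x p * x q) = 0 := by
      have := congrArg (fun T : Euc n →ₗ[ℝ] Euc n => T (EuclideanSpace.single p 1) q) hsum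
      simpa [LinearMap.sum_apply, projMap, EuclideanSpace.inner_single_left, hpq.symm] using this
    have hle : ∀ x ∈ S, x p * x q ≤ 0 := by
      rintro x ⟨⟨i, j, hij, σ, τ, hσ, hτ, hx⟩, hne⟩
      change x = rv i j σ τ at hx
      rw [hbase, rv_neg] at hne
      by_contra hc
      push Not at hc
      apply hne
      subst hx
      have hi : i = p ∧ j = q ∨ i = q ∧ j = p := by
        rw [rv_apply, rv_apply] at hc
        by_cases h1 : p = i <;> by_cases h2 : p = j <;> by_cases h3 : q = i <;>
          by_cases h4 : q = j <;> simp [h1, h2, h3, h4] at hc <;> grind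
      have hst : σ = τ := by
        rw [rv_apply, rv_apply] at hc
        rcases hi with ⟨rfl, rfl⟩ | ⟨rfl, rfl⟩ <;> rcases hσ with rfl | rfl <;>
          rcases hτ with rfl | rfl <;> simp [hij, hij.symm] at hc ⊢ <;> nlinarith
      subst hst
      have hcomm : rv i j σ σ = rv p q σ σ := by
        rcases hi with ⟨rfl, rfl⟩ | ⟨rfl, rfl⟩
        · rfl
        · simp [rv, add_comm]
      rw [hcomm]
      rcases hσ with rfl | rfl <;> simp
    have hmem : rv p q 1 (-1) ∈ S := by
      refine ⟨⟨p, q, hpq, 1, -1, by simp, by simp, rfl⟩, ?_⟩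
      rw [hbase, rv_neg]
      rintro (h | h)
      · have := congrArg (fun v : Euc n => v q) h
        simp only [rv_apply] at this
        simp [hpq.symm] at this
        linarith
      · have := congrArg (fun v : Euc n => v p) h
        simp only [rv_apply] at this
        simp [hpq] at this
        linarith
    have hlt : ∑ x ∈ hfin.toFinset, υ x * (x p * x q) < ∑ x ∈ hfin.toFinset, (0 : ℝ) := by
      apply Finset.sum_lt_sum
      · intro x hx
        by_cases hxS : x ∈ S
        · exact mul_nonpos_of_nonneg_of_nonpos (hpos x hxS).le (hle x hxS)
        · simp [hzero x hxS]
      · refine ⟨rv p q 1 (-1), ?_, ?_⟩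
        · simpa using (hpos _ hmem).ne'
        · apply mul_neg_of_pos_of_neg (hpos _ hmem)
          rw [rv_apply, rv_apply]
          simp [hpq, hpq.symm]
    rw [hent] at hlt
    simp at hlt

end
end
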